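/- arXiv:1312.5501 — 6 statements merged into one kernel-verified Lean document; each statement's English description precedes it below -/
import Mathlib

section
/- (The Main Lemma.) Let P be a modular operad in sets and f: Ass → P a morphism of cyclic operads. Let A, B, C be tuples of distinct elements and x, y two further distinct elements (all labels pairwise distinct). Then ξ_{xy} f⟨A B x C y⟩ = ξ_{xy} f⟨B A x C y⟩. Informally: if an arc joining x to y cuts the circle into two semicircles, the labels on each semicircle can be cyclically permuted without changing the contracted element. -/
/-- A modular operad in the category of sets, presented with labels drawn
from `ℕ`: an element `x` has a finite set `legs x` of labels and a genus
`gen x`.  Bijections act via functions `ℕ → ℕ` that are injective on the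
legs, `comp a b` is the operadic composition `∘_{a,b}` and `xi a b` is
the contraction `ξ_{ab}`. -/
structure ModularOperad where
  El : Type
  legs : El → Finset ℕ
  gen : El → ℕ
  act : (ℕ → ℕ) → El → El
  comp : ℕ → ℕ → El → El → El
  xi : ℕ → ℕ → El → El
  -- book-keeping of legs and genus
  legs_act : ∀ (ρ : ℕ → ℕ) (x : El), Set.InjOn ρ (legs x : Set ℕ) →
    legs (act ρ x) = (legs x).image ρ
  gen_act : ∀ (ρ : ℕ → ℕ) (x : El), Set.InjOn ρ (legs x : Set ℕ) →
    gen (act ρ x) = gen x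
  legs_comp : ∀ (a b : ℕ) (x y : El), a ∈ legs x → b ∈ legs y →
    Disjoint (legs x) (legs y) →
    legs (comp a b x y) = (legs x).erase a ∪ (legs y).erase b
  gen_comp : ∀ (a b : ℕ) (x y : El), a ∈ legs x → b ∈ legs y →
    Disjoint (legs x) (legs y) →
    gen (comp a b x y) = gen x + gen y
  legs_xi : ∀ (a b : ℕ) (x : El), a ∈ legs x → b ∈ legs x → a ≠ b →
    legs (xi a b x) = ((legs x).erase a).erase b
  gen_xi : ∀ (a b : ℕ) (x : El), a ∈ legs x → b ∈ legs x → a ≠ b →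
    gen (xi a b x) = gen x + 1
  -- `ξ_{ab} = ξ_{ba}`
  xi_symm : ∀ (a b : ℕ) (x : El), xi a b x = xi b a x
  -- functoriality of the action (axiom 2)
  act_id : ∀ x : El, act id x = x
  act_congr : ∀ (ρ ρ' : ℕ → ℕ) (x : El), (∀ c ∈ legs x, ρ c = ρ' c) →
    act ρ x = act ρ' x
  act_act : ∀ (ρ σ : ℕ → ℕ) (x : El), Set.InjOn σ (legs x : Set ℕ) →
    Set.InjOn ρ (((legs x).image σ : Finset ℕ) : Set ℕ) →
    act (ρ ∘ σ) x = act ρ (act σ x)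
  -- axiom 1: symmetry of `∘`
  comp_symm : ∀ (a b : ℕ) (x y : El), a ∈ legs x → b ∈ legs y →
    Disjoint (legs x) (legs y) → comp a b x y = comp b a y x
  -- axiom 3: equivariance of `∘`
  act_comp : ∀ (ρ : ℕ → ℕ) (a b : ℕ) (x y : El), a ∈ legs x → b ∈ legs y →
    Disjoint (legs x) (legs y) →
    Set.InjOn ρ ((legs x ∪ legs y : Finset ℕ) : Set ℕ) →
    act ρ (comp a b x y) = comp (ρ a) (ρ b) (act ρ x) (act ρ y)
  -- axiom 4: equivariance of `ξ`
  act_xi : ∀ (ρ : ℕ → ℕ) (a b : ℕ) (x : El), a ∈ legs x → b ∈ legs x →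
    a ≠ b → Set.InjOn ρ (legs x : Set ℕ) →
    act ρ (xi a b x) = xi (ρ a) (ρ b) (act ρ x)
  -- axiom 5
  xi_xi : ∀ (a b c d : ℕ) (x : El), a ∈ legs x → b ∈ legs x → c ∈ legs x →
    d ∈ legs x → a ≠ b → c ≠ d → a ≠ c → a ≠ d → b ≠ c → b ≠ d →
    xi a b (xi c d x) = xi c d (xi a b x)
  -- axiom 6: `ξ_{ab}(x ∘_{c,d} y) = ξ_{cd}(x ∘_{a,b} y)`,
  -- `a, c` legs of `x` and `b, d` legs of `y`
  xi_comp_exchange : ∀ (a b c d : ℕ) (x y : El), a ∈ legs x → c ∈ legs x →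
    b ∈ legs y → d ∈ legs y → a ≠ c → b ≠ d → Disjoint (legs x) (legs y) →
    xi a b (comp c d x y) = xi c d (comp a b x y)
  -- axiom 7: `ξ_{cd}(x) ∘_{a,b} y = ξ_{cd}(x ∘_{a,b} y)`, `c, d` legs of `x`
  xi_comp_left : ∀ (a b c d : ℕ) (x y : El), a ∈ legs x → b ∈ legs y →
    c ∈ legs x → d ∈ legs x → c ≠ d → a ≠ c → a ≠ d →
    Disjoint (legs x) (legs y) →
    comp a b (xi c d x) y = xi c d (comp a b x y)
  -- axiom 8: associativity of `∘`
  comp_assoc : ∀ (a b c d : ℕ) (x y z : El), a ∈ legs x → b ∈ legs y →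
    c ∈ legs y → d ∈ legs z → b ≠ c →
    Disjoint (legs x) (legs y) → Disjoint (legs x) (legs z) →
    Disjoint (legs y) (legs z) →
    comp c d (comp a b x y) z = comp a b x (comp c d y z)

/-- A morphism of cyclic operads `f : Ass → P` into (the underlying cyclic
operad of) a modular operad `P`.  An element of `Ass(C)` is a cyclic order
on the nonempty finite set `C`, represented by a nonempty duplicate-free
list of labels, two lists representing the same element iff they are
rotations of each other (`f_rot`).  `f` lands in the genus `0` part of `P`,
commutes with the actions of bijections (`f_act`) and with the cyclic
operad composition `⟨X a⟩ ∘_{a,b} ⟨b Y⟩ = ⟨X Y⟩` (`f_comp`). -/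
structure AssMorphism (P : ModularOperad) where
  f : List ℕ → P.El
  legs_f : ∀ l : List ℕ, l ≠ [] → l.Nodup → P.legs (f l) = l.toFinset
  gen_f : ∀ l : List ℕ, l ≠ [] → l.Nodup → P.gen (f l) = 0
  f_rot : ∀ l l' : List ℕ, l ≠ [] → l.Nodup → l ~r l' → f l = f l'
  f_act : ∀ (ρ : ℕ → ℕ) (l : List ℕ), l ≠ [] → l.Nodup →
    Set.InjOn ρ (l.toFinset : Set ℕ) → f (l.map ρ) = P.act ρ (f l)
  f_comp : ∀ (X Y : List ℕ) (a b : ℕ), (X ++ a :: b :: Y).Nodup →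
    X ++ Y ≠ [] →
    P.comp a b (f (X ++ [a])) (f (b :: Y)) = f (X ++ Y)

/-- A morphism of modular operads. -/
structure ModularHom (Q P : ModularOperad) where
  toFun : Q.El → P.El
  legs_map : ∀ x, P.legs (toFun x) = Q.legs x
  gen_map : ∀ x, P.gen (toFun x) = Q.gen x
  map_act : ∀ (ρ : ℕ → ℕ) (x : Q.El), Set.InjOn ρ (Q.legs x : Set ℕ) →
    toFun (Q.act ρ x) = P.act ρ (toFun x)
  map_comp : ∀ (a b : ℕ) (x y : Q.El), a ∈ Q.legs x → b ∈ Q.legs y →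
    Disjoint (Q.legs x) (Q.legs y) →
    toFun (Q.comp a b x y) = P.comp a b (toFun x) (toFun y)
  map_xi : ∀ (a b : ℕ) (x : Q.El), a ∈ Q.legs x → b ∈ Q.legs x → a ≠ b →
    toFun (Q.xi a b x) = P.xi a b (toFun x)

/-- A list of blocks `L = [C₁, …, C_b]` is a valid presentation of an element
`{⟨C₁⟩, …, ⟨C_b⟩}` of `QO` iff there is at least one block, the blocks are
nonempty and they are duplicate-free and pairwise disjoint. -/
def QOValid (L : List (List ℕ)) : Prop :=
  L ≠ [] ∧ L.flatten.Nodup ∧ ∀ l ∈ L, l ≠ []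

/-- Two lists of blocks present the same element of `QO` iff one can be taken
to the other by permuting the blocks and rotating each block. -/
def QOEquiv (L L' : List (List ℕ)) : Prop :=
  ∃ L'' : List (List ℕ), L.Perm L'' ∧ List.Forall₂ (· ~r ·) L'' L'

/-- The modular operad `QO` of homeomorphism classes of 2D compact surfaces
with marked points on the boundary: a modular operad `Q` together with a
presentation `ofBlocks L g` of its elements, `ofBlocks [C₁, …, C_b] g` being the symbol
`{⟨C₁⟩, …, ⟨C_b⟩}^g` of geometric genus `g` and operadic genus
`G = 2g + b - 1`, with the relabeling action, composition (gluing two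
marked points on boundaries of two different surfaces) and contraction
(gluing two marked points of the same surface, either on the same boundary
component or on two different ones) given by the explicit formulas below.
The canonical inclusion `ι : Ass → QO` sends `⟨C⟩` to `ofBlocks [C] 0`. -/
structure QOperad where
  Q : ModularOperad
  ofBlocks : List (List ℕ) → ℕ → Q.El
  legs_mk : ∀ (L : List (List ℕ)) (g : ℕ), QOValid L →
    Q.legs (ofBlocks L g) = L.flatten.toFinset
  gen_mk : ∀ (L : List (List ℕ)) (g : ℕ), QOValid L →
    Q.gen (ofBlocks L g) = 2 * g + L.length - 1
  mk_equiv : ∀ (L L' : List (List ℕ)) (g : ℕ), QOValid L → QOEquiv L L' →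
    ofBlocks L g = ofBlocks L' g
  mk_inj : ∀ (L L' : List (List ℕ)) (g g' : ℕ), QOValid L → QOValid L' →
    ofBlocks L g = ofBlocks L' g' → g = g' ∧ QOEquiv L L'
  mk_surj : ∀ x : Q.El, ∃ (L : List (List ℕ)) (g : ℕ), QOValid L ∧ x = ofBlocks L g
  act_mk : ∀ (ρ : ℕ → ℕ) (L : List (List ℕ)) (g : ℕ), QOValid L →
    Set.InjOn ρ (L.flatten.toFinset : Set ℕ) →
    Q.act ρ (ofBlocks L g) = ofBlocks (L.map (List.map ρ)) g
  comp_mk : ∀ (X Y : List ℕ) (R R' : List (List ℕ)) (a b g g' : ℕ),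
    QOValid ((X ++ [a]) :: R) → QOValid ((b :: Y) :: R') →
    (((X ++ [a]) :: R).flatten ++ ((b :: Y) :: R').flatten).Nodup →
    X ++ Y ≠ [] →
    Q.comp a b (ofBlocks ((X ++ [a]) :: R) g) (ofBlocks ((b :: Y) :: R') g') =
      ofBlocks ((X ++ Y) :: (R ++ R')) (g + g')
  xi_same_mk : ∀ (A B : List ℕ) (R : List (List ℕ)) (a b g : ℕ),
    QOValid ((a :: (A ++ b :: B)) :: R) → A ≠ [] → B ≠ [] →
    Q.xi a b (ofBlocks ((a :: (A ++ b :: B)) :: R) g) = ofBlocks (B :: A :: R) g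
  xi_diff_mk : ∀ (A B : List ℕ) (R : List (List ℕ)) (a b g : ℕ),
    QOValid ((a :: A) :: (b :: B) :: R) → B ++ A ≠ [] →
    Q.xi a b (ofBlocks ((a :: A) :: (b :: B) :: R) g) = ofBlocks ((B ++ A) :: R) (g + 1)

/-- `xiChain P [(a₁,b₁), …, (aₙ,bₙ)] x = ξ_{a₁b₁}(ξ_{a₂b₂}(⋯(ξ_{aₙbₙ} x)))`. -/
def xiChain (P : ModularOperad) (prs : List (ℕ × ℕ)) (x : P.El) : P.El :=
  prs.foldr (fun p y => P.xi p.1 p.2 y) x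

/-- The pairs `(e₁,e₂), (e₃,e₄), …, (e_{2k-1}, e_{2k})` of contracted labels
(`e` is used with 1-based indices). -/
def pairList (e : ℕ → ℕ) (k : ℕ) : List (ℕ × ℕ) :=
  (List.range k).map fun i => (e (2 * i + 1), e (2 * i + 2))

/-- The list of contracted pairs of a canonical expression with `b` boundary
components and geometric genus `g`:
`ξ_{12} ξ_{34} ⋯ ξ_{2b-3,2b-2} ξ_{2b-1,2b+1} ξ_{2b,2b+2} ⋯ ξ_{2b+4g-5,2b+4g-3} ξ_{2b+4g-4,2b+4g-2}`
(indices of the fresh labels `e`, 1-based). -/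
def canonPairs (b g : ℕ) (e : ℕ → ℕ) : List (ℕ × ℕ) :=
  ((List.range (b - 1)).map fun i => (e (2 * i + 1), e (2 * i + 2))) ++
    ((List.range g).map fun j =>
      [(e (2 * b - 1 + 4 * j), e (2 * b + 1 + 4 * j)),
       (e (2 * b + 4 * j), e (2 * b + 2 + 4 * j))]).flatten

/-- The list `C₁ e₁ C₂ e₂ e₃ C₃ e₄ ⋯ e_{2b-3} C_b e_{2b-2} e_{2b-1} e_{2b} ⋯ e_{4g+2b-2}`
representing the cyclic order `a_q` of a canonical expression (`e` is used
with 1-based indices). -/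
def canonList (L : List (List ℕ)) (g : ℕ) (e : ℕ → ℕ) : List ℕ :=
  match L with
  | [] => []
  | C₁ :: rest =>
      C₁ ++ (rest.zipIdx.map fun p => e (2 * p.2 + 1) :: (p.1 ++ [e (2 * p.2 + 2)])).flatten
        ++ ((List.range (4 * g)).map fun j => e (2 * rest.length + 1 + j))

/-- `e 1, …, e n` are pairwise distinct labels avoiding the finite set `S`. -/
def FreshLabels (e : ℕ → ℕ) (n : ℕ) (S : Finset ℕ) : Prop :=
  Set.InjOn e (Set.Icc 1 n) ∧ ∀ i ∈ Set.Icc 1 n, e i ∉ S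

theorem main_aux (P : ModularOperad) (f : AssMorphism P)
    (A B C : List ℕ) (x y c d : ℕ)
    (hnd : (A ++ B ++ x :: (C ++ [y])).Nodup)
    (hc : c ∉ A ++ B ++ x :: (C ++ [y])) (hd : d ∉ A ++ B ++ x :: (C ++ [y]))
    (hcd : c ≠ d) :
    P.xi x y (f.f (A ++ B ++ x :: (C ++ [y]))) =
      P.xi c d (f.f (C ++ c :: B ++ (A ++ [d]))) := by
  have hbig : (c :: d :: (A ++ B ++ x :: (C ++ [y]))).Nodup := by
    simp only [List.nodup_cons, List.mem_cons, not_or]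
    exact ⟨⟨hcd, hc⟩, hd, hnd⟩
  have e1 : P.comp c d (f.f ((B ++ x :: C) ++ [c])) (f.f (d :: (y :: A)))
      = f.f ((B ++ x :: C) ++ (y :: A)) := by
    apply f.f_comp
    · refine (List.Perm.nodup_iff ?_).1 hbig
      rw [List.perm_iff_count]; intro a; simp [List.count_cons]; omega
    · simp
  have e2 : P.comp x y (f.f ((C ++ c :: B) ++ [x])) (f.f (y :: (A ++ [d])))
      = f.f ((C ++ c :: B) ++ (A ++ [d])) := by
    apply f.f_comp
    · refine (List.Perm.nodup_iff ?_).1 hbig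
      rw [List.perm_iff_count]; intro a; simp [List.count_cons]; omega
    · simp
  have nu : ((B ++ x :: C) ++ [c]).Nodup := by
    have : (((B ++ x :: C) ++ [c]) ++ (d :: y :: A)).Nodup := by
      refine (List.Perm.nodup_iff ?_).1 hbig
      rw [List.perm_iff_count]; intro a; simp [List.count_cons]; omega
    exact this.of_append_left
  have nall : (((B ++ x :: C) ++ [c]) ++ (d :: y :: A)).Nodup := by
    refine (List.Perm.nodup_iff ?_).1 hbig
    rw [List.perm_iff_count]; intro a; simp [List.count_cons]; omega
  have nv : (d :: y :: A).Nodup := nall.of_append_right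
  have r0 : f.f (A ++ B ++ x :: (C ++ [y])) = f.f ((B ++ x :: C) ++ (y :: A)) := by
    apply f.f_rot _ _ (by simp) hnd
    have h : (A ++ (B ++ x :: C ++ [y])) ~r ((B ++ x :: C ++ [y]) ++ A) :=
      List.isRotated_append
    simpa using h
  have r1 : f.f ((B ++ x :: C) ++ [c]) = f.f ((C ++ c :: B) ++ [x]) := by
    apply f.f_rot _ _ (by simp) nu
    have h : ((B ++ [x]) ++ (C ++ [c])) ~r ((C ++ [c]) ++ (B ++ [x])) :=
      List.isRotated_append
    simpa using h
  have r2 : f.f (d :: (y :: A)) = f.f (y :: (A ++ [d])) := by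
    apply f.f_rot _ _ (by simp) nv
    have h : ([d] ++ (y :: A)) ~r ((y :: A) ++ [d]) := List.isRotated_append
    simpa using h
  have lu := f.legs_f _ (by simp) nu
  have lv := f.legs_f _ (by simp) nv
  rw [r0, ← e1, ← e2, ← r1, ← r2]
  have hx : x ≠ c := by rintro rfl; simp at hc
  have hy : y ≠ d := by rintro rfl; simp at hd
  apply P.xi_comp_exchange _ _ _ _ _ _ _ _ _ _ hx hy
  · rw [lu, lv, List.disjoint_toFinset_iff_disjoint]
    exact List.disjoint_of_nodup_append nall
  all_goals first | (rw [lu]; simp; done) | (rw [lv]; simp; done)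

/-- (The Main Lemma.)
`ξ_{xy} f⟨A B x C y⟩ = ξ_{xy} f⟨B A x C y⟩`: if an arc joining `x` to `y`
cuts the circle into two semicircles, the labels on each semicircle may be
cyclically permuted without changing the contracted element. -/
theorem main_lemma (P : ModularOperad) (f : AssMorphism P)
    (A B C : List ℕ) (x y : ℕ)
    (hnd : (A ++ B ++ x :: (C ++ [y])).Nodup) :
    P.xi x y (f.f (A ++ B ++ x :: (C ++ [y]))) =
      P.xi x y (f.f (B ++ A ++ x :: (C ++ [y]))) := by
  obtain ⟨c, hc⟩ := Infinite.exists_notMem_finset (A ++ B ++ x :: (C ++ [y])).toFinset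
  obtain ⟨d, hd⟩ := Infinite.exists_notMem_finset (c :: (A ++ B ++ x :: (C ++ [y]))).toFinset
  rw [List.mem_toFinset] at hc hd
  rw [List.mem_cons, not_or] at hd
  have hp : (A ++ B ++ x :: (C ++ [y])).Perm ((B ++ A) ++ [] ++ x :: (C ++ [y])) := by
    rw [List.append_nil]
    exact List.perm_append_comm.append_right _
  have h1 := main_aux P f A B C x y c d hnd hc hd.2 (Ne.symm hd.1)
  have h2 := main_aux P f (B ++ A) [] C x y c d (hp.nodup_iff.1 hnd)
    (fun h => hc (hp.mem_iff.2 h)) (fun h => hd.2 (hp.mem_iff.2 h)) (Ne.symm hd.1)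
  rw [h1]
  simp only [List.append_nil] at h2
  rw [h2]
  simp
end

section
/- (Boundary-moving lemma.) Let P be a modular operad in sets and f: Ass → P a morphism of cyclic operads. Let L = (l₁,…,l_i), M, N be tuples of distinct labels and x, y two further distinct labels. Let Ξ be any composition of contractions ξ_{e e'} whose indices e, e' run over entries of L, M, N (the same composition on both sides). Then Ξ ξ_{xy} f⟨x L y M N⟩ = Ξ ξ_{xy} f⟨M x L y N⟩. Informally: a 'boundary' — a sequence of consecutive labels whose first and last are joined by an arc — can be moved anywhere on the circle. -/
theorem boundary_move_aux (P : ModularOperad) (f : AssMorphism P)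
    (L M N : List ℕ) (x y : ℕ)
    (hnd : (x :: (L ++ y :: (M ++ N))).Nodup) :
    P.xi x y (f.f (x :: (L ++ y :: (M ++ N)))) =
      P.xi x y (f.f (M ++ x :: (L ++ y :: N))) := by
  obtain ⟨a, ha⟩ := Infinite.exists_notMem_finset (x :: (L ++ y :: (M ++ N))).toFinset
  obtain ⟨b, hb⟩ := Infinite.exists_notMem_finset (a :: x :: (L ++ y :: (M ++ N))).toFinset
  have hall : (a :: b :: x :: y :: (L ++ (M ++ N))).Nodup := by
    have hp : (x :: (L ++ y :: (M ++ N))).Perm (x :: y :: (L ++ (M ++ N))) :=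
      List.Perm.cons _ List.perm_middle
    have h2 := hp.nodup_iff.1 hnd
    simp only [List.mem_toFinset, List.mem_cons, List.mem_append] at ha hb
    rw [List.nodup_cons, List.nodup_cons]
    simp only [List.mem_cons, List.mem_append]
    refine ⟨?_, ?_, h2⟩ <;> tauto
  have nd : ∀ l : List ℕ, (∀ c, l.count c ≤ (a :: b :: x :: y :: (L ++ (M ++ N))).count c) →
      l.Nodup := fun l hl => by
    rw [List.nodup_iff_count_le_one] at hall ⊢
    exact fun c => (hl c).trans (hall c)
  have nA : (M ++ [a] ++ [y]).Nodup := nd _ (fun c => by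
    simp only [List.count_append, List.count_cons, List.count_nil]; omega)
  have nB : (x :: (L ++ b :: N)).Nodup := nd _ (fun c => by
    simp only [List.count_append, List.count_cons, List.count_nil]; omega)
  have nC : (M ++ [a] ++ (L ++ b :: N)).Nodup := nd _ (fun c => by
    simp only [List.count_append, List.count_cons, List.count_nil]; omega)
  have c1 : P.comp a b (f.f ((y :: M) ++ [a])) (f.f (b :: (N ++ x :: L)))
      = f.f ((y :: M) ++ (N ++ x :: L)) := f.f_comp _ _ _ _ (nd _ (fun c => by
    simp only [List.count_append, List.count_cons]; omega)) (by simp)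
  have c2 : P.comp y x (f.f ((M ++ [a]) ++ [y])) (f.f (x :: (L ++ b :: N)))
      = f.f ((M ++ [a]) ++ (L ++ b :: N)) := f.f_comp _ _ _ _ (nd _ (fun c => by
    simp only [List.count_append, List.count_cons, List.count_nil]; omega)) (by simp)
  have r1 : f.f ((M ++ [a]) ++ [y]) = f.f ((y :: M) ++ [a]) :=
    f.f_rot _ _ (by simp) nA
      (by simpa using (List.isRotated_append (l := M ++ [a]) (l' := [y])))
  have r2 : f.f (x :: (L ++ b :: N)) = f.f (b :: (N ++ x :: L)) :=
    f.f_rot _ _ (by simp) nB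
      (by simpa using (List.isRotated_append (l := x :: L) (l' := b :: N)))
  have r3 : f.f (x :: (L ++ y :: (M ++ N))) = f.f ((y :: M) ++ (N ++ x :: L)) :=
    f.f_rot _ _ (by simp) hnd
      (by simpa using (List.isRotated_append (l := x :: L) (l' := y :: (M ++ N))))
  have lA := f.legs_f _ (by simp) nA
  have lB := f.legs_f _ (by simp) nB
  have lC := f.legs_f _ (by simp) nC
  have hab : a ≠ b := by rintro rfl; simp at hall
  have hay : a ≠ y := by rintro rfl; simp at hall
  have hbx : b ≠ x := by rintro rfl; simp at hall
  have hdis : Disjoint (P.legs (f.f (M ++ [a] ++ [y]))) (P.legs (f.f (x :: (L ++ b :: N)))) := by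
    rw [lA, lB, List.disjoint_toFinset_iff_disjoint]
    have : ((M ++ [a] ++ [y]) ++ (x :: (L ++ b :: N))).Nodup := nd _ (fun c => by
      simp only [List.count_append, List.count_cons, List.count_nil]; omega)
    exact List.disjoint_of_nodup_append this
  have ex := P.xi_comp_exchange y x a b (f.f (M ++ [a] ++ [y])) (f.f (x :: (L ++ b :: N)))
    (by rw [lA]; simp) (by rw [lA]; simp) (by rw [lB]; simp) (by rw [lB]; simp)
    hay.symm hbx.symm hdis
  rw [c2, r1, r2, c1, ← r3, P.xi_symm] at ex
  rw [ex]
  -- relabel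
  have hmem : ∀ c, c ∈ L ∨ c ∈ M ∨ c ∈ N → c ≠ a ∧ c ≠ b ∧ c ≠ x ∧ c ≠ y := by
    intro c hc
    refine ⟨?_, ?_, ?_, ?_⟩ <;> rintro rfl <;>
      simp only [List.nodup_cons, List.mem_cons, List.mem_append] at hall <;> tauto
  have hxy : x ≠ y := by rintro rfl; simp at hall
  let ρ : ℕ → ℕ := fun n => if n = a then x else if n = b then y else n
  have ρa : ρ a = x := by simp [ρ]
  have ρb : ρ b = y := by simp [ρ, hab.symm]
  have ρc : ∀ c, c ∈ L ∨ c ∈ M ∨ c ∈ N → ρ c = c := by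
    intro c hc
    obtain ⟨h1, h2, -, -⟩ := hmem c hc
    simp [ρ, h1, h2]
  have ρL : L.map ρ = L := by
    conv_rhs => rw [← List.map_id L]
    exact List.map_congr_left fun c hc => ρc c (Or.inl hc)
  have ρM : M.map ρ = M := by
    conv_rhs => rw [← List.map_id M]
    exact List.map_congr_left fun c hc => ρc c (Or.inr (Or.inl hc))
  have ρN : N.map ρ = N := by
    conv_rhs => rw [← List.map_id N]
    exact List.map_congr_left fun c hc => ρc c (Or.inr (Or.inr hc))
  have hmap : (M ++ [a] ++ (L ++ b :: N)).map ρ = M ++ x :: (L ++ y :: N) := by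
    simp [ρL, ρM, ρN, ρa, ρb]
  have hinj : Set.InjOn ρ ((M ++ [a] ++ (L ++ b :: N)).toFinset : Set ℕ) := by
    have : ((M ++ [a] ++ (L ++ b :: N)).map ρ).Nodup := by
      rw [hmap]
      exact nd _ (fun c => by
        simp only [List.count_append, List.count_cons]; omega)
    intro u hu v hv huv
    exact List.inj_on_of_nodup_map this (List.mem_toFinset.1 hu) (List.mem_toFinset.1 hv) huv
  have e1 := f.f_act ρ _ (by simp) nC hinj
  have amem : a ∈ P.legs (f.f (M ++ [a] ++ (L ++ b :: N))) := by rw [lC]; simp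
  have bmem : b ∈ P.legs (f.f (M ++ [a] ++ (L ++ b :: N))) := by rw [lC]; simp
  have e2 := P.act_xi ρ a b _ amem bmem hab (by rw [lC]; exact hinj)
  rw [← e1, hmap, ρa, ρb] at e2
  rw [← e2]
  conv_lhs => rw [← P.act_id (P.xi a b _)]
  refine P.act_congr _ _ _ fun c hc => ?_
  rw [P.legs_xi a b _ amem bmem hab, lC] at hc
  simp only [Finset.mem_erase, List.mem_toFinset, List.mem_append, List.mem_cons,
    List.not_mem_nil] at hc
  rw [ρc c (by tauto)]; rfl

/-- (Boundary-moving lemma.)  For any composition `Ξ` of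
contractions whose indices run over the entries of `L`, `M`, `N`,
`Ξ ξ_{xy} f⟨x L y M N⟩ = Ξ ξ_{xy} f⟨M x L y N⟩`: a boundary — a sequence of
consecutive labels whose first and last are joined by an arc — can be moved
anywhere on the circle. -/
theorem boundary_move (P : ModularOperad) (f : AssMorphism P)
    (L M N : List ℕ) (x y : ℕ) (prs : List (ℕ × ℕ))
    (hnd : (x :: (L ++ y :: (M ++ N))).Nodup)
    (hprs : ∀ p ∈ prs, p.1 ∈ L ++ M ++ N ∧ p.2 ∈ L ++ M ++ N) :
    xiChain P prs (P.xi x y (f.f (x :: (L ++ y :: (M ++ N))))) =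
      xiChain P prs (P.xi x y (f.f (M ++ x :: (L ++ y :: N)))) := by
  rw [boundary_move_aux P f L M N x y hnd]
end

section
/- (Handle-moving lemma.) Let P be a modular operad in sets and f: Ass → P a morphism of cyclic operads. Let M, N be tuples of distinct labels and a, b, c, d four further distinct labels. Let Ξ be any composition of contractions ξ_{e e'} whose indices e, e' run over entries of M and N (the same composition on both sides). Then Ξ ξ_{ac} ξ_{bd} f⟨a b c d M N⟩ = Ξ ξ_{ac} ξ_{bd} f⟨M a b c d N⟩. Informally: a 'handle' — four consecutive labels a, b, c, d with arcs a–c and b–d — can be moved anywhere on the circle. -/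
theorem hm_rot (P : ModularOperad) (f : AssMorphism P) (l l' A B : List ℕ)
    (hl : l = A ++ B) (hl' : l' = B ++ A) (h : l.Nodup) (hne : l ≠ []) : f.f l = f.f l' := by
  refine f.f_rot l l' hne h ?_
  rw [hl, hl']
  exact List.isRotated_append

theorem hm_swap (P : ModularOperad) (f : AssMorphism P) (X1 X2 Y1 Y2 : List ℕ) (a c p q : ℕ)
    (h : (p :: q :: a :: c :: (X1 ++ (X2 ++ (Y1 ++ Y2)))).Nodup) :
    P.xi a c (f.f (a :: (X2 ++ Y1) ++ c :: (Y2 ++ X1))) =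
      P.xi p q (f.f (p :: (X1 ++ Y2) ++ q :: (Y1 ++ X2))) := by
  have n1 : ((X1 ++ a :: X2) ++ p :: q :: (Y1 ++ c :: Y2)).Nodup := by
    refine (List.Perm.nodup_iff ?_).1 h
    rw [List.perm_iff_count]; intro z; simp [List.count_cons]; omega
  have n2 : ((X2 ++ p :: X1) ++ a :: c :: (Y2 ++ q :: Y1)).Nodup := by
    refine (List.Perm.nodup_iff ?_).1 h
    rw [List.perm_iff_count]; intro z; simp [List.count_cons]; omega
  have e1 := f.f_comp _ _ p q n1 (by simp)
  have e2 := f.f_comp _ _ a c n2 (by simp)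
  have nx : ((X1 ++ a :: X2) ++ [p]).Nodup :=
    n1.sublist (by simp)
  have ny : (q :: (Y1 ++ c :: Y2)).Nodup := by
    have := (List.nodup_append.1 n1).2.1
    exact this.of_cons
  have r1 : f.f ((X1 ++ a :: X2) ++ [p]) = f.f ((X2 ++ p :: X1) ++ [a]) :=
    hm_rot P f _ _ (X1 ++ [a]) (X2 ++ [p]) (by simp) (by simp) nx (by simp)
  have r2 : f.f (q :: (Y1 ++ c :: Y2)) = f.f (c :: (Y2 ++ q :: Y1)) :=
    hm_rot P f _ _ (q :: Y1) (c :: Y2) (by simp) (by simp) ny (by simp)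
  have r3 : f.f (a :: (X2 ++ Y1) ++ c :: (Y2 ++ X1)) = f.f ((X1 ++ a :: X2) ++ (Y1 ++ c :: Y2)) := by
    refine hm_rot P f _ _ (a :: (X2 ++ Y1) ++ c :: Y2) X1 (by simp) (by simp) ?_ (by simp)
    have : (X1 ++ a :: X2 ++ (Y1 ++ c :: Y2)).Nodup := n1.sublist (by simp)
    refine (List.Perm.nodup_iff ?_).1 this
    rw [List.perm_iff_count]; intro z; simp [List.count_cons]; omega
  have r4 : f.f (p :: (X1 ++ Y2) ++ q :: (Y1 ++ X2)) = f.f ((X2 ++ p :: X1) ++ (Y2 ++ q :: Y1)) := by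
    refine hm_rot P f _ _ (p :: (X1 ++ Y2) ++ q :: Y1) X2 (by simp) (by simp) ?_ (by simp)
    have : (X2 ++ p :: X1 ++ (Y2 ++ q :: Y1)).Nodup := n2.sublist (by simp)
    refine (List.Perm.nodup_iff ?_).1 this
    rw [List.perm_iff_count]; intro z; simp [List.count_cons]; omega
  have lx := f.legs_f _ (by simp) nx
  have ly := f.legs_f _ (by simp) ny
  rw [r3, r4, ← e1, ← e2, ← r1, ← r2]
  have hac : a ≠ p := by rintro rfl; simp at h
  have hcq : c ≠ q := by rintro rfl; simp at h
  refine P.xi_comp_exchange a c p q _ _ ?_ ?_ ?_ ?_ hac hcq ?_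
  · rw [lx]; simp
  · rw [lx]; simp
  · rw [ly]; simp
  · rw [ly]; simp
  · rw [lx, ly, List.disjoint_toFinset_iff_disjoint]
    have : ((X1 ++ a :: X2 ++ [p]) ++ (q :: (Y1 ++ c :: Y2))).Nodup := by simpa using n1
    exact List.disjoint_of_nodup_append this

theorem hm_turn (P : ModularOperad) (f : AssMorphism P) (X1 X2 Y1 Y2 l l' : List ℕ) (a c : ℕ)
    (hl : l = a :: (X2 ++ Y1) ++ c :: (Y2 ++ X1))
    (hl' : l' = a :: (Y1 ++ X2) ++ c :: (X1 ++ Y2)) (h : l.Nodup) :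
    P.xi a c (f.f l) = P.xi a c (f.f l') := by
  subst hl hl'
  obtain ⟨p, hp⟩ := Infinite.exists_notMem_finset (a :: c :: (X1 ++ (X2 ++ (Y1 ++ Y2)))).toFinset
  obtain ⟨q, hq⟩ := Infinite.exists_notMem_finset (p :: a :: c :: (X1 ++ (X2 ++ (Y1 ++ Y2)))).toFinset
  rw [List.mem_toFinset] at hp hq
  have h0 : (a :: c :: (X1 ++ (X2 ++ (Y1 ++ Y2)))).Nodup := by
    refine (List.Perm.nodup_iff ?_).1 h
    rw [List.perm_iff_count]; intro z; simp [List.count_cons]; omega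
  have h1 := List.nodup_cons.2 ⟨hq, List.nodup_cons.2 ⟨hp, h0⟩⟩
  rw [hm_swap P f X1 X2 Y1 Y2 a c p q ?_]
  · have := hm_swap P f [] (X1 ++ Y2) [] (Y1 ++ X2) p q a c ?_
    · simpa using this
    · refine (List.Perm.nodup_iff ?_).1 h1
      rw [List.perm_iff_count]; intro z; simp [List.count_cons]; omega
  · refine (List.Perm.nodup_iff ?_).1 h1
    rw [List.perm_iff_count]; intro z; simp [List.count_cons]; omega

theorem hm_main (P : ModularOperad) (f : AssMorphism P) (M N : List ℕ) (a b c d : ℕ)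
    (hnd : (a :: b :: c :: d :: (M ++ N)).Nodup) :
    P.xi a c (P.xi b d (f.f (a :: b :: c :: d :: (M ++ N)))) =
      P.xi a c (P.xi b d (f.f (M ++ a :: b :: c :: d :: N))) := by
  have nd : ∀ l : List ℕ, (a :: b :: c :: d :: (M ++ N)).Perm l → l.Nodup :=
    fun l hl => (List.Perm.nodup_iff hl).1 hnd
  have comm : ∀ l : List ℕ, (a :: b :: c :: d :: (M ++ N)).Perm l →
      P.xi a c (P.xi b d (f.f l)) = P.xi b d (P.xi a c (f.f l)) := by
    intro l hl
    have hm : ∀ x ∈ (a :: b :: c :: d :: (M ++ N)), x ∈ P.legs (f.f l) := by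
      intro x hx
      rw [f.legs_f l (by rintro rfl; simp at hl) (nd l hl), List.mem_toFinset]
      exact hl.mem_iff.1 hx
    simp only [List.nodup_cons, List.mem_cons, not_or] at hnd
    apply P.xi_xi
    iterate 4 exact hm _ (by simp)
    all_goals first | tauto | (intro hh; subst hh; tauto)
  have turnac : ∀ X1 X2 Y1 Y2 l l' : List ℕ, (a :: b :: c :: d :: (M ++ N)).Perm l →
      (a :: b :: c :: d :: (M ++ N)).Perm l' →
      l = a :: (X2 ++ Y1) ++ c :: (Y2 ++ X1) → l' = a :: (Y1 ++ X2) ++ c :: (X1 ++ Y2) →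
      P.xi a c (P.xi b d (f.f l)) = P.xi a c (P.xi b d (f.f l')) := by
    intro X1 X2 Y1 Y2 l l' h1 h2 e1 e2
    rw [comm l h1, comm l' h2, hm_turn P f X1 X2 Y1 Y2 l l' a c e1 e2 (nd l h1)]
  have turnbd : ∀ X1 X2 Y1 Y2 l l' : List ℕ, (a :: b :: c :: d :: (M ++ N)).Perm l →
      l = b :: (X2 ++ Y1) ++ d :: (Y2 ++ X1) → l' = b :: (Y1 ++ X2) ++ d :: (X1 ++ Y2) →
      P.xi a c (P.xi b d (f.f l)) = P.xi a c (P.xi b d (f.f l')) := by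
    intro X1 X2 Y1 Y2 l l' h1 e1 e2
    rw [hm_turn P f X1 X2 Y1 Y2 l l' b d e1 e2 (nd l h1)]
  have rot : ∀ A B l l' : List ℕ, (a :: b :: c :: d :: (M ++ N)).Perm l →
      l = A ++ B → l' = B ++ A →
      P.xi a c (P.xi b d (f.f l)) = P.xi a c (P.xi b d (f.f l')) := by
    intro A B l l' h1 e1 e2
    rw [hm_rot P f l l' A B e1 e2 (nd l h1) (by rintro rfl; simp at h1)]
  rw [turnac N [b] [] (d :: M) _ (a :: b :: c :: (N ++ d :: M)) ?_ ?_ (by simp) (by simp),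
    rot [a] (b :: c :: (N ++ d :: M)) _ (b :: c :: (N ++ d :: (M ++ [a]))) ?_ (by simp) (by simp),
    turnbd [a] [c] N M _ (b :: (N ++ c :: d :: a :: M)) ?_ (by simp) (by simp),
    rot (b :: (N ++ [c, d])) (a :: M) _ (a :: (M ++ b :: (N ++ [c, d]))) ?_ (by simp) (by simp),
    turnac [] M (b :: N) [d] _ (a :: b :: (N ++ M ++ [c, d])) ?_ ?_ (by simp) (by simp),
    rot [a] (b :: (N ++ M ++ [c, d])) _ (b :: (N ++ M ++ [c, d, a])) ?_ (by simp) (by simp),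
    turnbd [] (N ++ M) [c] [a] _ (b :: c :: (N ++ M ++ [d, a])) ?_ (by simp) (by simp),
    rot (b :: c :: (N ++ M ++ [d])) [a] _ (a :: b :: c :: (N ++ M ++ [d])) ?_ (by simp) (by simp),
    turnac [d] [b] [] (N ++ M) _ (a :: b :: c :: d :: (N ++ M)) ?_ ?_ (by simp) (by simp),
    rot (a :: b :: c :: d :: N) M _ (M ++ a :: b :: c :: d :: N) ?_ (by simp) (by simp)]
  all_goals
    rw [List.perm_iff_count]; intro z; simp [List.count_cons]; try omega

/-- (Handle-moving lemma.)  For any composition `Ξ` of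
contractions whose indices run over the entries of `M`, `N`,
`Ξ ξ_{ac} ξ_{bd} f⟨a b c d M N⟩ = Ξ ξ_{ac} ξ_{bd} f⟨M a b c d N⟩`: a handle —
four consecutive labels `a b c d` with arcs `a–c` and `b–d` — can be moved
anywhere on the circle. -/
theorem handle_move (P : ModularOperad) (f : AssMorphism P)
    (M N : List ℕ) (a b c d : ℕ) (prs : List (ℕ × ℕ))
    (hnd : (a :: b :: c :: d :: (M ++ N)).Nodup)
    (hprs : ∀ p ∈ prs, p.1 ∈ M ++ N ∧ p.2 ∈ M ++ N) :
    xiChain P prs (P.xi a c (P.xi b d (f.f (a :: b :: c :: d :: (M ++ N))))) =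
      xiChain P prs (P.xi a c (P.xi b d (f.f (M ++ a :: b :: c :: d :: N)))) := by
  rw [hm_main P f M N a b c d hnd]
end

section
/- Let P be a modular operad in sets and f: Ass → P a morphism of cyclic operads. For q = {c₁,…,c_b}^g ∈ QO(C,G), the element ξ_{12}ξ_{34}⋯ξ_{2b−3,2b−2}ξ_{2b−1,2b+1}⋯ξ_{2b+4g−4,2b+4g−2} f(a_q) ∈ P(C,G) is the same for every canonical expression of q; i.e., it is independent of the choice of the fresh labels e₁,…,e_{2G}, of the representing tuples Cᵢ of the cyclic orders cᵢ, and of the order in which the cycles cᵢ appear in a_q. Hence f̃(q) := ξ_{12}ξ_{34}⋯ξ_{2b+4g−4,2b+4g−2} f(a_q) is a well-defined map f̃: QO → P. -/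
namespace FT

def lab (prs : List (ℕ × ℕ)) : List ℕ := prs.flatMap fun p => [p.1, p.2]

theorem lab_perm {p q : List (ℕ × ℕ)} (h : p.Perm q) : (lab p).Perm (lab q) :=
  h.flatMap_right _

theorem legs_xiChain (P : ModularOperad) (x : P.El) (prs : List (ℕ × ℕ)) :
    (lab prs).Nodup → (∀ i ∈ lab prs, i ∈ P.legs x) →
    P.legs (xiChain P prs x) = P.legs x \ (lab prs).toFinset := by
  induction prs with
  | nil => intro _ _; simp [xiChain, lab]
  | cons p t ih =>
    intro h1 h2
    have h1' : p.1 ≠ p.2 ∧ p.1 ∉ lab t ∧ p.2 ∉ lab t ∧ (lab t).Nodup := by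
      simp only [lab, List.flatMap_cons, List.cons_append, List.nil_append,
        List.nodup_cons, List.mem_cons, not_or] at h1 ⊢
      tauto
    have h2' : p.1 ∈ P.legs x ∧ p.2 ∈ P.legs x ∧ ∀ i ∈ lab t, i ∈ P.legs x := by
      simp only [lab, List.flatMap_cons, List.cons_append, List.nil_append,
        List.mem_cons] at h2 ⊢
      exact ⟨h2 _ (by simp), h2 _ (by simp), fun i hi => h2 _ (by simp [hi])⟩
    obtain ⟨ha, hb, hc, hd⟩ := h1'
    obtain ⟨ka, kb, kc⟩ := h2'
    have e := ih hd kc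
    have : xiChain P (p :: t) x = P.xi p.1 p.2 (xiChain P t x) := rfl
    rw [this, P.legs_xi _ _ _ (by rw [e]; simp [ka, hb]) (by rw [e]; simp [kb, hc]) ha, e]
    ext i
    simp [lab]
    tauto

theorem xiChain_perm (P : ModularOperad) (x : P.El) {p q : List (ℕ × ℕ)} (h : p.Perm q) :
    (lab p).Nodup → (∀ i ∈ lab p, i ∈ P.legs x) → xiChain P p x = xiChain P q x := by
  induction h with
  | nil => intros; rfl
  | cons a _ ih =>
    intro h1 h2
    have := ih (by
        simp only [lab, List.flatMap_cons] at h1 ⊢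
        exact (List.nodup_append.1 h1).2.1)
      (fun i hi => h2 i (by simp only [lab, List.flatMap_cons, List.mem_append] at hi ⊢; tauto))
    exact congrArg (P.xi a.1 a.2) this
  | swap a b t =>
    intro h1 h2
    have h3 : (lab t).Nodup ∧ a.1 ∉ lab t ∧ a.2 ∉ lab t ∧ b.1 ∉ lab t ∧ b.2 ∉ lab t ∧
        a.1 ≠ a.2 ∧ b.1 ≠ b.2 ∧ b.1 ≠ a.1 ∧ b.1 ≠ a.2 ∧ b.2 ≠ a.1 ∧ b.2 ≠ a.2 := by
      simp only [lab, List.flatMap_cons, List.cons_append, List.nil_append,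
        List.nodup_cons, List.mem_cons, not_or] at h1 ⊢
      tauto
    have h4 : a.1 ∈ P.legs x ∧ a.2 ∈ P.legs x ∧ b.1 ∈ P.legs x ∧ b.2 ∈ P.legs x ∧
        ∀ i ∈ lab t, i ∈ P.legs x := by
      simp only [lab, List.flatMap_cons, List.cons_append, List.nil_append,
        List.mem_cons] at h2 ⊢
      exact ⟨h2 _ (by simp), h2 _ (by simp), h2 _ (by simp), h2 _ (by simp),
        fun i hi => h2 _ (by simp [hi])⟩
    obtain ⟨k0, k1, k2, k3, k4, k5, k6, k7, k8, k9, k10⟩ := h3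
    obtain ⟨l1, l2, l3, l4, l5⟩ := h4
    have e := legs_xiChain P x t k0 l5
    unfold xiChain at e
    apply P.xi_xi <;> first | assumption | (rw [e]; simp [*])
  | trans p1 p2 ih1 ih2 =>
    intro h1 h2
    rw [ih1 h1 h2]
    exact ih2 ((lab_perm p1).nodup_iff.1 h1) (fun i hi => h2 i ((lab_perm p1).mem_iff.2 hi))

theorem act_xiChain (P : ModularOperad) (x : P.El) (ρ : ℕ → ℕ)
    (hρ : Set.InjOn ρ (P.legs x : Set ℕ)) (prs : List (ℕ × ℕ)) :
    (lab prs).Nodup → (∀ i ∈ lab prs, i ∈ P.legs x) →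
    P.act ρ (xiChain P prs x) =
      xiChain P (prs.map fun p => (ρ p.1, ρ p.2)) (P.act ρ x) := by
  induction prs with
  | nil => intro _ _; rfl
  | cons p t ih =>
    intro h1 h2
    have h1' : p.1 ≠ p.2 ∧ p.1 ∉ lab t ∧ p.2 ∉ lab t ∧ (lab t).Nodup := by
      simp only [lab, List.flatMap_cons, List.cons_append, List.nil_append,
        List.nodup_cons, List.mem_cons, not_or] at h1 ⊢
      tauto
    have h2' : p.1 ∈ P.legs x ∧ p.2 ∈ P.legs x ∧ ∀ i ∈ lab t, i ∈ P.legs x := by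
      simp only [lab, List.flatMap_cons, List.cons_append, List.nil_append,
        List.mem_cons] at h2 ⊢
      exact ⟨h2 _ (by simp), h2 _ (by simp), fun i hi => h2 _ (by simp [hi])⟩
    obtain ⟨ha, hb, hc, hd⟩ := h1'
    obtain ⟨ka, kb, kc⟩ := h2'
    have e := legs_xiChain P x t hd kc
    have : xiChain P (p :: t) x = P.xi p.1 p.2 (xiChain P t x) := rfl
    rw [this, P.act_xi _ _ _ _ (by rw [e]; simp [ka, hb]) (by rw [e]; simp [kb, hc]) ha
      (by rw [e]; exact hρ.mono (by intro i; simp; tauto)), ih hd kc]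
    rfl

def Valid (prs : List (ℕ × ℕ)) (w : List ℕ) : Prop :=
  w ≠ [] ∧ w.Nodup ∧ (lab prs).Nodup ∧ ∀ i ∈ lab prs, i ∈ w

theorem Valid.perm {prs : List (ℕ × ℕ)} {w w' : List ℕ} (h : Valid prs w) (p : w.Perm w') :
    Valid prs w' := by
  obtain ⟨h1, h2, h3, h4⟩ := h
  refine ⟨?_, p.nodup_iff.1 h2, h3, fun i hi => p.mem_iff.1 (h4 i hi)⟩
  rintro rfl
  exact h1 p.eq_nil

variable {P : ModularOperad} (f : AssMorphism P)

def E (prs : List (ℕ × ℕ)) (w : List ℕ) : P.El := xiChain P prs (f.f w)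

theorem E_relabel (prs : List (ℕ × ℕ)) (w : List ℕ) (ρ : ℕ → ℕ) (h : Valid prs w)
    (hρ : ∀ i ∈ w, ∀ j ∈ w, ρ i = ρ j → i = j) (hf : ∀ i ∈ w, i ∉ lab prs → ρ i = i) :
    E f prs w = E f (prs.map fun p => (ρ p.1, ρ p.2)) (w.map ρ) := by
  obtain ⟨h1, h2, h3, h4⟩ := h
  have hl := f.legs_f w h1 h2
  have hi : Set.InjOn ρ (w.toFinset : Set ℕ) := by
    intro i hi j hj
    exact hρ i (by simpa using hi) j (by simpa using hj)
  have h4' : ∀ i ∈ lab prs, i ∈ P.legs (f.f w) := by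
    rw [hl]; intro i hi; simpa using h4 i hi
  unfold E
  rw [f.f_act ρ w h1 h2 hi, ← act_xiChain P _ ρ (by rw [hl]; exact hi) prs h3 h4']
  rw [P.act_congr ρ id, P.act_id]
  intro c hc
  rw [legs_xiChain P _ _ h3 h4', hl] at hc
  simp at hc
  exact hf c hc.1 hc.2

def Eqv (prs : List (ℕ × ℕ)) (w w' : List ℕ) : Prop :=
  w.Perm w' ∧ (Valid prs w → E f prs w = E f prs w')

variable {f} {prs : List (ℕ × ℕ)}

theorem Eqv.refl (w : List ℕ) : Eqv f prs w w := ⟨List.Perm.refl _, fun _ => rfl⟩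

theorem Eqv.trans {w w' w'' : List ℕ} (h : Eqv f prs w w') (h' : Eqv f prs w' w'') :
    Eqv f prs w w'' :=
  ⟨h.1.trans h'.1, fun v => (h.2 v).trans (h'.2 (v.perm h.1))⟩

theorem Eqv.symm {w w' : List ℕ} (h : Eqv f prs w w') : Eqv f prs w' w :=
  ⟨h.1.symm, fun v => (h.2 (v.perm h.1.symm)).symm⟩

theorem Eqv.rot {w w' : List ℕ} (h : w ~r w') : Eqv f prs w w' :=
  ⟨h.perm, fun v => congrArg (xiChain P prs) (f.f_rot w w' v.1 v.2.1 h)⟩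

theorem Eqv.rt {w w' : List ℕ} (X Y : List ℕ) (h : w = X ++ Y) (h' : w' = Y ++ X) :
    Eqv f prs w w' := by
  subst h h'; exact Eqv.rot List.isRotated_append

theorem core (a b : ℕ) (A1 A2 B1 B2 : List ℕ)
    (hn : (A2 ++ a :: A1 ++ (B2 ++ b :: B1)).Nodup) :
    P.xi a b (f.f (A2 ++ a :: A1 ++ (B2 ++ b :: B1))) =
      P.xi a b (f.f (A1 ++ a :: A2 ++ (B1 ++ b :: B2))) := by
  obtain ⟨c, hc⟩ := Infinite.exists_notMem_finset
    (A2 ++ a :: A1 ++ (B2 ++ b :: B1)).toFinset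
  obtain ⟨d, hd⟩ := Infinite.exists_notMem_finset
    (c :: (A2 ++ a :: A1 ++ (B2 ++ b :: B1))).toFinset
  simp only [List.mem_toFinset] at hc hd
  have hdc : d ≠ c := by intro h; exact hd (by simp [h])
  have hd' : d ∉ (A2 ++ a :: A1 ++ (B2 ++ b :: B1)) := fun h => hd (List.mem_cons_of_mem _ h)
  have hN : (c :: d :: (A2 ++ a :: A1 ++ (B2 ++ b :: B1))).Nodup :=
    List.nodup_cons.2 ⟨by rw [List.mem_cons, not_or]; exact ⟨hdc.symm, hc⟩,
      List.nodup_cons.2 ⟨hd', hn⟩⟩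
  have N1 : (A2 ++ a :: A1 ++ c :: d :: (B2 ++ b :: B1)).Nodup := by
    refine (List.Perm.nodup_iff ?_).1 hN
    rw [List.perm_iff_count]; intro i
    simp only [List.count_append, List.count_cons]; ring
  have N2 : (A1 ++ c :: A2 ++ a :: b :: (B1 ++ d :: B2)).Nodup := by
    refine (List.Perm.nodup_iff ?_).1 hN
    rw [List.perm_iff_count]; intro i
    simp only [List.count_append, List.count_cons]; ring
  have N3 : (a :: b :: (A1 ++ c :: A2 ++ (B1 ++ d :: B2))).Nodup := by
    refine (List.Perm.nodup_iff ?_).1 hN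
    rw [List.perm_iff_count]; intro i
    simp only [List.count_append, List.count_cons]; ring
  have N4 : ((A2 ++ a :: A1 ++ [c]) ++ (d :: (B2 ++ b :: B1))).Nodup := by simpa using N1
  have hac : a ≠ c := by rintro rfl; exact hc (by simp)
  have hbd : b ≠ d := by rintro rfl; exact hd' (by simp)
  have e1 := f.f_comp (A2 ++ a :: A1) (B2 ++ b :: B1) c d N1 (by simp)
  have e2 := f.f_comp (A1 ++ c :: A2) (B1 ++ d :: B2) a b N2 (by simp)
  have n1 : ((A2 ++ a :: A1) ++ [c]).Nodup := (List.nodup_append.1 N4).1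
  have n2 : (d :: (B2 ++ b :: B1)).Nodup := (List.nodup_append.1 N4).2.1
  have r1 : f.f ((A2 ++ a :: A1) ++ [c]) = f.f ((A1 ++ c :: A2) ++ [a]) := by
    apply f.f_rot _ _ (by simp) n1
    have := List.isRotated_append (l := A2 ++ [a]) (l' := A1 ++ [c])
    simpa using this
  have r2 : f.f (d :: (B2 ++ b :: B1)) = f.f (b :: (B1 ++ d :: B2)) := by
    apply f.f_rot _ _ (by simp) n2
    have := List.isRotated_append (l := d :: B2) (l' := b :: B1)
    simpa using this
  have l1 := f.legs_f _ (by simp) n1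
  have l2 := f.legs_f _ (by simp) n2
  have ex := P.xi_comp_exchange a b c d (f.f ((A2 ++ a :: A1) ++ [c]))
    (f.f (d :: (B2 ++ b :: B1))) (by rw [l1]; simp)
    (by rw [l1]; simp) (by rw [l2]; simp) (by rw [l2]; simp)
    hac hbd (by
      rw [l1, l2, Finset.disjoint_left]
      intro i hi hi'
      rw [List.mem_toFinset] at hi hi'
      exact (List.nodup_append.1 N4).2.2 i hi i hi' rfl)
  rw [e1, r1, r2, e2] at ex
  rw [ex]
  have inj : ∀ w : List ℕ, a ∉ w → b ∉ w → a ≠ b → ∀ i ∈ w, ∀ j ∈ w,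
      (fun n => if n = c then a else if n = d then b else n) i =
      (fun n => if n = c then a else if n = d then b else n) j → i = j := by
    clear * -
    intro w h1 h2 h3 i hi j hj
    have : i ≠ a := by rintro rfl; exact h1 hi
    have : i ≠ b := by rintro rfl; exact h2 hi
    have : j ≠ a := by rintro rfl; exact h1 hj
    have : j ≠ b := by rintro rfl; exact h2 hj
    simp only
    split_ifs <;> simp_all <;> omega
  simp only [List.nodup_cons, List.mem_cons, not_or] at N3
  have := E_relabel f [(c, d)] (A1 ++ c :: A2 ++ (B1 ++ d :: B2))
    (fun n => if n = c then a else if n = d then b else n)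
    ⟨by simp, N3.2.2, by simpa [lab] using hdc.symm, by simp [lab]⟩
    (inj _ N3.1.2 N3.2.1 N3.1.1) (by
      intro i _ hi
      simp only [lab, List.flatMap_cons, List.flatMap_nil, List.append_nil, List.mem_cons,
        List.not_mem_nil, or_false, not_or] at hi
      simp [hi.1, hi.2])
  have m : ∀ l : List ℕ, c ∉ l → d ∉ l →
      l.map (fun n => if n = c then a else if n = d then b else n) = l := by
    intro l h1 h2
    conv_rhs => rw [← List.map_id l]
    apply List.map_congr_left
    intro i hi
    have : i ≠ c := by rintro rfl; exact h1 hi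
    have : i ≠ d := by rintro rfl; exact h2 hi
    simp [*]
  simp only [List.mem_append, List.mem_cons, not_or] at hc hd'
  simp only [List.map_append, List.map_cons, List.map_nil, if_pos, if_neg hdc] at this
  rw [m A1 (by tauto) (by tauto), m A2 (by tauto) (by tauto), m B1 (by tauto) (by tauto),
    m B2 (by tauto) (by tauto)] at this
  exact this

theorem K0 {a b : ℕ} (hab : (a, b) ∈ prs) {U V U' V' : List ℕ} (hU : U ~r U') (hV : V ~r V') :
    Eqv f prs (a :: U ++ b :: V) (a :: V' ++ b :: U') := by
  refine ⟨?_, ?_⟩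
  · have := hU.perm
    have := hV.perm
    have h2 : (a :: V' ++ b :: U').Perm (a :: U' ++ b :: V') := by grind
    refine List.Perm.trans ?_ h2.symm
    simp only [List.cons_append]
    exact (hU.perm.append (hV.perm.cons b)).cons a
  · intro v
    obtain ⟨n, rfl⟩ := hU
    obtain ⟨m, rfl⟩ := hV
    obtain ⟨A1, B2, rfl, hU'⟩ : ∃ A1 B2, U = A1 ++ B2 ∧ U.rotate n = B2 ++ A1 :=
      ⟨U.take (n % U.length), U.drop (n % U.length), by simp,
        List.rotate_eq_drop_append_take_mod⟩
    obtain ⟨B1, A2, rfl, hV'⟩ : ∃ B1 A2, V = B1 ++ A2 ∧ V.rotate m = A2 ++ B1 :=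
      ⟨V.take (m % V.length), V.drop (m % V.length), by simp,
        List.rotate_eq_drop_append_take_mod⟩
    rw [hU', hV']
    have hp : prs.Perm (prs.erase (a, b) ++ [(a, b)]) :=
      (List.perm_cons_erase hab).trans (List.perm_append_comm (l₁ := [(a, b)]))
    have w1 : (a :: (A1 ++ B2) ++ b :: (B1 ++ A2)) ~r (A2 ++ a :: A1 ++ (B2 ++ b :: B1)) := by
      have := List.isRotated_append (l := a :: (A1 ++ B2) ++ b :: B1) (l' := A2)
      simpa using this
    have w2 : (a :: (A2 ++ B1) ++ b :: (B2 ++ A1)) ~r (A1 ++ a :: A2 ++ (B1 ++ b :: B2)) := by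
      have := List.isRotated_append (l := a :: (A2 ++ B1) ++ b :: B2) (l' := A1)
      simpa using this
    have v1 := v.perm w1.perm
    have v2 : Valid prs (A1 ++ a :: A2 ++ (B1 ++ b :: B2)) := v1.perm (by grind)
    rw [(Eqv.rot (f := f) w1).2 v, (Eqv.rot (f := f) w2).2 (v2.perm w2.perm.symm)]
    unfold E
    rw [xiChain_perm P _ hp v1.2.2.1 (by
        rw [f.legs_f _ v1.1 v1.2.1]; intro i hi; exact List.mem_toFinset.2 (v1.2.2.2 i hi)),
      xiChain_perm P (f.f (A1 ++ a :: A2 ++ (B1 ++ b :: B2))) hp v1.2.2.1 (by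
        rw [f.legs_f _ v2.1 v2.2.1]; intro i hi; exact List.mem_toFinset.2 (v2.2.2.2 i hi))]
    have := core (f := f) a b A1 A2 B1 B2 v1.2.1
    unfold xiChain
    rw [List.foldr_append, List.foldr_append]
    simp only [List.foldr_cons, List.foldr_nil]
    rw [this]

theorem K {a b : ℕ} (hab : (a, b) ∈ prs) {U V U' V' : List ℕ} (hU : U ~r U') (hV : V ~r V') :
    Eqv f prs (a :: U ++ b :: V) (a :: U' ++ b :: V') :=
  (K0 hab hU hV).trans (K0 hab (List.IsRotated.refl _) (List.IsRotated.refl _))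

variable (f prs) in
def Mov (M : List ℕ) : Prop := ∀ X Y : List ℕ, Eqv f prs (M ++ (X ++ Y)) (M ++ (Y ++ X))

theorem mov_nil : Mov f prs [] := fun X Y => Eqv.rt X Y (by simp) (by simp)

theorem mov_append {M N : List ℕ} (hM : Mov f prs M) (hN : Mov f prs N) :
    Mov f prs (M ++ N) := by
  intro X Y
  have h1 := hM (N ++ X) Y
  have h2 : Eqv f prs (M ++ (Y ++ (N ++ X))) (N ++ (X ++ (M ++ Y))) :=
    Eqv.rt (M ++ Y) (N ++ X) (by simp) (by simp)
  have h3 := hN X (M ++ Y)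
  have h4 : Eqv f prs (N ++ ((M ++ Y) ++ X)) (M ++ ((Y ++ X) ++ N)) :=
    Eqv.rt N (M ++ Y ++ X) (by simp) (by simp)
  have h5 := hM (Y ++ X) N
  have := (((by simpa using h1 : Eqv f prs (M ++ N ++ (X ++ Y)) (M ++ (Y ++ (N ++ X)))).trans
    h2).trans h3).trans (h4.trans h5)
  simpa using this

theorem mov_block {a b : ℕ} (hab : (a, b) ∈ prs) (C : List ℕ) :
    Mov f prs (a :: (C ++ [b])) := by
  intro X Y
  have := K (f := f) hab (List.IsRotated.refl C) (List.isRotated_append (l := X) (l' := Y))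
  simpa using this

theorem mov_handle {a b c d : ℕ} (hac : (a, c) ∈ prs) (hbd : (b, d) ∈ prs) :
    Mov f prs [a, b, c, d] := by
  intro X Y
  have h1 : Eqv f prs (a :: [b] ++ c :: (d :: X ++ Y)) (a :: [b] ++ c :: (Y ++ d :: X)) :=
    K hac (List.IsRotated.refl _) List.isRotated_append
  have h2 : Eqv f prs (a :: [b] ++ c :: (Y ++ d :: X)) (b :: (c :: Y) ++ d :: (X ++ [a])) :=
    Eqv.rt [a] (b :: (c :: Y) ++ d :: X) (by simp) (by simp)
  have h3 : Eqv f prs (b :: (c :: Y) ++ d :: (X ++ [a])) (b :: (Y ++ [c]) ++ d :: (X ++ [a])) :=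
    K hbd (List.isRotated_append (l := [c]) (l' := Y)) (List.IsRotated.refl _)
  have h4 : Eqv f prs (b :: (Y ++ [c]) ++ d :: (X ++ [a])) (a :: (b :: Y) ++ c :: (d :: X)) :=
    Eqv.rt (b :: (Y ++ [c]) ++ d :: X) [a] (by simp) (by simp)
  have h5 : Eqv f prs (a :: (b :: Y) ++ c :: (d :: X)) (a :: (Y ++ [b]) ++ c :: (d :: X)) :=
    K hac (List.isRotated_append (l := [b]) (l' := Y)) (List.IsRotated.refl _)
  have h6 : Eqv f prs (a :: (Y ++ [b]) ++ c :: (d :: X)) (b :: [c] ++ d :: (X ++ a :: Y)) :=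
    Eqv.rt (a :: Y) (b :: [c] ++ d :: X) (by simp) (by simp)
  have h7 : Eqv f prs (b :: [c] ++ d :: (X ++ a :: Y)) (b :: [c] ++ d :: (Y ++ X ++ [a])) :=
    K hbd (List.IsRotated.refl _) (by
      have := List.isRotated_append (l := X ++ [a]) (l' := Y)
      simpa using this)
  have h8 : Eqv f prs (b :: [c] ++ d :: (Y ++ X ++ [a])) ([a, b, c, d] ++ (Y ++ X)) :=
    Eqv.rt (b :: [c] ++ d :: (Y ++ X)) [a] (by simp) (by simp)
  exact h1.trans (h2.trans (h3.trans (h4.trans (h5.trans (h6.trans (h7.trans h8))))))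

/-- exchange the contents of two adjacent blocks -/
theorem swap_blocks {a b c d : ℕ} (hab : (a, b) ∈ prs) (hcd : (c, d) ∈ prs)
    (C D A B : List ℕ) :
    Eqv f prs (A ++ (a :: (C ++ [b]) ++ (c :: (D ++ [d])) ++ B))
      (A ++ (a :: (D ++ [b]) ++ (c :: (C ++ [d])) ++ B)) := by
  have h0 : Eqv f prs (A ++ (a :: (C ++ [b]) ++ (c :: (D ++ [d])) ++ B))
      (a :: C ++ b :: (c :: D ++ d :: (B ++ A))) :=
    Eqv.rt A (a :: C ++ b :: (c :: D ++ d :: B)) (by simp) (by simp)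
  have h0' : Eqv f prs (A ++ (a :: (D ++ [b]) ++ (c :: (C ++ [d])) ++ B))
      (a :: D ++ b :: (c :: C ++ d :: (B ++ A))) :=
    Eqv.rt A (a :: D ++ b :: (c :: C ++ d :: B)) (by simp) (by simp)
  refine h0.trans (Eqv.trans ?_ h0'.symm)
  generalize B ++ A = W
  have h1 : Eqv f prs (a :: C ++ b :: (c :: D ++ d :: W)) (a :: (c :: D ++ d :: W) ++ b :: C) :=
    K0 hab (List.IsRotated.refl _) (List.IsRotated.refl _)
  have h2 : Eqv f prs (a :: (c :: D ++ d :: W) ++ b :: C)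
      ((c :: (D ++ [d])) ++ ((W ++ b :: C) ++ [a])) :=
    Eqv.rt [a] (c :: D ++ d :: W ++ b :: C) (by simp) (by simp)
  have h3 := mov_block (f := f) hcd D (W ++ b :: C) [a]
  have h4 : Eqv f prs ((c :: (D ++ [d])) ++ ([a] ++ (W ++ b :: C)))
      (a :: W ++ b :: (C ++ c :: D ++ [d])) :=
    Eqv.rt (c :: (D ++ [d])) (a :: W ++ b :: C) (by simp) (by simp)
  have h5 : Eqv f prs (a :: W ++ b :: (C ++ c :: D ++ [d]))
      (a :: (C ++ c :: D ++ [d]) ++ b :: W) :=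
    K0 hab (List.IsRotated.refl _) (List.IsRotated.refl _)
  have h6 : Eqv f prs (a :: (C ++ c :: D ++ [d]) ++ b :: W)
      (c :: D ++ d :: (b :: W ++ a :: C)) :=
    Eqv.rt (a :: C) (c :: D ++ d :: (b :: W)) (by simp) (by simp)
  have h7 : Eqv f prs (c :: D ++ d :: (b :: W ++ a :: C)) (c :: (b :: W ++ a :: C) ++ d :: D) :=
    K0 hcd (List.IsRotated.refl _) (List.IsRotated.refl _)
  have h8 : Eqv f prs (c :: (b :: W ++ a :: C) ++ d :: D) (a :: (C ++ d :: D ++ [c]) ++ b :: W) :=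
    Eqv.rt (c :: b :: W) (a :: C ++ d :: D) (by simp) (by simp)
  have h9 : Eqv f prs (a :: (C ++ d :: D ++ [c]) ++ b :: W)
      (a :: (D ++ c :: C ++ [d]) ++ b :: W) :=
    K hab (by
      have := List.isRotated_append (l := C ++ [d]) (l' := D ++ [c])
      simpa using this) (List.IsRotated.refl _)
  have h10 : Eqv f prs (a :: (D ++ c :: C ++ [d]) ++ b :: W)
      ((c :: (C ++ [d])) ++ ([b] ++ (W ++ a :: D))) :=
    Eqv.rt (a :: D) (c :: C ++ d :: b :: W) (by simp) (by simp)
  have h11 := mov_block (f := f) hcd C [b] (W ++ a :: D)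
  have h12 : Eqv f prs ((c :: (C ++ [d])) ++ ((W ++ a :: D) ++ [b]))
      (a :: D ++ b :: (c :: C ++ d :: W)) :=
    Eqv.rt (c :: C ++ d :: W) (a :: D ++ [b]) (by simp) (by simp)
  exact h1.trans (h2.trans (h3.trans (h4.trans (h5.trans (h6.trans (h7.trans (h8.trans
    (h9.trans (h10.trans (h11.trans h12))))))))))

def blk (e : ℕ → ℕ) : ℕ → List (List ℕ) → List ℕ
  | _, [] => []
  | k, C :: r => e (2 * k + 1) :: (C ++ [e (2 * k + 2)]) ++ blk e (k + 1) r

def hnd (e : ℕ → ℕ) (r g : ℕ) : List ℕ := (List.range (4 * g)).map fun j => e (2 * r + 1 + j)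

theorem blk_eq (e : ℕ → ℕ) (r : List (List ℕ)) : ∀ k,
    ((r.zipIdx k).map fun p => e (2 * p.2 + 1) :: (p.1 ++ [e (2 * p.2 + 2)])).flatten
      = blk e k r := by
  induction r with
  | nil => intro k; rfl
  | cons C r ih => intro k; simp [blk, List.zipIdx_cons, ← ih]

theorem canonList_cons (C : List ℕ) (r : List (List ℕ)) (g : ℕ) (e : ℕ → ℕ) :
    canonList (C :: r) g e = C ++ (blk e 0 r ++ hnd e r.length g) := by
  rw [← blk_eq]
  simp [canonList, hnd]

def HasPairs (prs : List (ℕ × ℕ)) (e : ℕ → ℕ) (k n : ℕ) : Prop :=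
  ∀ i, k ≤ i → i < n → (e (2 * i + 1), e (2 * i + 2)) ∈ prs

theorem mov_blk {e : ℕ → ℕ} (r : List (List ℕ)) : ∀ k, HasPairs prs e k (k + r.length) →
    Mov f prs (blk e k r) := by
  induction r with
  | nil => intro k _; exact mov_nil
  | cons C r ih =>
    intro k h
    simp only [List.length_cons] at h
    exact mov_append (mov_block (h k le_rfl (by omega)) C)
      (ih (k + 1) fun i h1 h2 => h i (by omega) (by omega))

theorem mov_hnd {e : ℕ → ℕ} (r g : ℕ)
    (h : ∀ j < g, (e (2 * r + 1 + 4 * j), e (2 * r + 1 + 4 * j + 2)) ∈ prs ∧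
      (e (2 * r + 1 + 4 * j + 1), e (2 * r + 1 + 4 * j + 3)) ∈ prs) :
    Mov f prs (hnd e r g) := by
  induction g with
  | zero => exact mov_nil
  | succ g ih =>
    have h1 := mov_append (ih fun j hj => h j (by omega))
      (mov_handle (f := f) (h g (by omega)).1 (h g (by omega)).2)
    have : hnd e r (g + 1) = hnd e r g ++ [e (2 * r + 1 + 4 * g), e (2 * r + 1 + 4 * g + 1),
      e (2 * r + 1 + 4 * g + 2), e (2 * r + 1 + 4 * g + 3)] := by
      simp [hnd, mul_add, List.range_succ, add_assoc]
    rw [this]; exact h1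

theorem blk_perm {e : ℕ → ℕ} {r r' : List (List ℕ)} (p : r.Perm r') :
    ∀ k A B, HasPairs prs e k (k + r.length) →
    Eqv f prs (A ++ (blk e k r ++ B)) (A ++ (blk e k r' ++ B)) := by
  induction p with
  | nil => intros; exact Eqv.refl _
  | cons C _ ih =>
    intro k A B h
    simp only [List.length_cons] at h
    have := ih (k + 1) (A ++ e (2 * k + 1) :: (C ++ [e (2 * k + 2)])) B
      (fun i h1 h2 => h i (by omega) (by omega))
    simpa [blk] using this
  | swap C D r =>
    intro k A B h
    simp only [List.length_cons] at h
    have := swap_blocks (f := f) (h k le_rfl (by omega)) (h (k + 1) (by omega) (by omega)) D C A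
      (blk e (k + 1 + 1) r ++ B)
    simpa [blk] using this
  | trans p1 p2 ih1 ih2 =>
    intro k A B h
    exact (ih1 k A B h).trans (ih2 k A B (by rw [← p1.length_eq]; exact h))

theorem blk_rot {e : ℕ → ℕ} {r r' : List (List ℕ)} (p : List.Forall₂ (· ~r ·) r r') :
    ∀ k A B, HasPairs prs e k (k + r.length) →
    Eqv f prs (A ++ (blk e k r ++ B)) (A ++ (blk e k r' ++ B)) := by
  induction p with
  | nil => intros; exact Eqv.refl _
  | @cons C D r r' h0 _ ih =>
    intro k A B h
    simp only [List.length_cons] at h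
    have h1 := ih (k + 1) (A ++ e (2 * k + 1) :: (C ++ [e (2 * k + 2)])) B
      (fun i h1 h2 => h i (by omega) (by omega))
    have h2 : Eqv f prs
      (e (2 * k + 1) :: C ++ e (2 * k + 2) :: ((blk e (k + 1) r' ++ B) ++ A))
      (e (2 * k + 1) :: D ++ e (2 * k + 2) :: ((blk e (k + 1) r' ++ B) ++ A)) :=
      K (h k le_rfl (by omega)) h0 (List.IsRotated.refl _)
    have h3 : ∀ C : List ℕ, Eqv f prs
      (A ++ e (2 * k + 1) :: (C ++ [e (2 * k + 2)]) ++ (blk e (k + 1) r' ++ B))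
      (e (2 * k + 1) :: C ++ e (2 * k + 2) :: ((blk e (k + 1) r' ++ B) ++ A)) := fun C =>
      Eqv.rt A (e (2 * k + 1) :: C ++ e (2 * k + 2) :: (blk e (k + 1) r' ++ B))
        (by simp) (by simp)
    have := h1.trans ((h3 C).trans (h2.trans (h3 D).symm))
    simpa [blk] using this

theorem swap_head {a b : ℕ} (hab : (a, b) ∈ prs) {M : List ℕ} (hM : Mov f prs M)
    (C D : List ℕ) :
    Eqv f prs (C ++ (a :: (D ++ [b]) ++ M)) (D ++ (a :: (C ++ [b]) ++ M)) := by
  have h1 : Eqv f prs (C ++ (a :: (D ++ [b]) ++ M)) (M ++ ((C ++ a :: D) ++ [b])) :=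
    Eqv.rt (C ++ a :: (D ++ [b])) M (by simp) (by simp)
  have h2 := hM (C ++ a :: D) [b]
  have h3 : Eqv f prs (M ++ ([b] ++ (C ++ a :: D))) (a :: (D ++ M) ++ b :: C) :=
    Eqv.rt (M ++ b :: C) (a :: D) (by simp) (by simp)
  have h4 : Eqv f prs (a :: (D ++ M) ++ b :: C) (a :: C ++ b :: (M ++ D)) :=
    K0 hab List.isRotated_append (List.IsRotated.refl _)
  have h5 : Eqv f prs (a :: C ++ b :: (M ++ D)) (D ++ (a :: (C ++ [b]) ++ M)) :=
    Eqv.rt (a :: C ++ b :: M) D (by simp) (by simp)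
  exact h1.trans (h2.trans (h3.trans (h4.trans h5)))

theorem rot_head {M : List ℕ} (hM : Mov f prs M) {C D : List ℕ} (h : C ~r D) :
    Eqv f prs (C ++ M) (D ++ M) := by
  obtain ⟨n, rfl⟩ := h
  have h1 : Eqv f prs (C ++ M) (M ++ (C.take (n % C.length) ++ C.drop (n % C.length))) :=
    Eqv.rt C M rfl (by simp)
  have h2 := hM (C.take (n % C.length)) (C.drop (n % C.length))
  have h3 : Eqv f prs (M ++ (C.drop (n % C.length) ++ C.take (n % C.length)))
      (C.rotate n ++ M) :=
    Eqv.rt M (C.rotate n) (by rw [List.rotate_eq_drop_append_take_mod]) rfl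
  exact h1.trans (h2.trans h3)

theorem canon_perm {e : ℕ → ℕ} {g : ℕ} {L L' : List (List ℕ)} (p : L.Perm L') :
    HasPairs prs e 0 (L.length - 1) → Mov f prs (hnd e (L.length - 1) g) →
    Eqv f prs (canonList L g e) (canonList L' g e) := by
  induction p with
  | nil => intros; exact Eqv.refl _
  | cons C p _ =>
    intro h _
    rw [canonList_cons, canonList_cons, p.length_eq]
    exact blk_perm p 0 C _ (by simpa using h)
  | swap C D r =>
    intro h hm
    simp only [List.length_cons, Nat.add_sub_cancel] at h hm
    rw [canonList_cons, canonList_cons]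
    have := swap_head (h 0 le_rfl (by omega)) (mov_append
      (mov_blk (f := f) r 1 (fun i h1 h2 => h i (by omega) (by omega))) hm) D C
    simpa [blk] using this
  | trans p1 p2 ih1 ih2 =>
    intro h hm
    exact (ih1 h hm).trans (ih2 (by rwa [← p1.length_eq]) (by rwa [← p1.length_eq]))

theorem canon_rot {e : ℕ → ℕ} {g : ℕ} {L L' : List (List ℕ)}
    (p : List.Forall₂ (· ~r ·) L L')
    (h : HasPairs prs e 0 (L.length - 1)) (hm : Mov f prs (hnd e (L.length - 1) g)) :
    Eqv f prs (canonList L g e) (canonList L' g e) := by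
  cases p with
  | nil => exact Eqv.refl _
  | cons h0 p =>
    simp only [List.length_cons, Nat.add_sub_cancel] at h hm
    rw [canonList_cons, canonList_cons, ← p.length_eq]
    refine (rot_head (mov_append (mov_blk _ 0 (by simpa using h)) hm) h0).trans ?_
    exact blk_rot p 0 _ _ (by simpa using h)

/-! validity of canonical expressions -/

theorem perm_blk (e : ℕ → ℕ) (r : List (List ℕ)) : ∀ k,
    (blk e k r).Perm (r.flatten ++ (List.range (2 * r.length)).map fun j => e (2 * k + 1 + j)) := by
  induction r with
  | nil => intro k; simp [blk]
  | cons C r ih =>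
    intro k
    have h := ih (k + 1)
    have : (List.range (2 * (C :: r).length)).map (fun j => e (2 * k + 1 + j)) =
        e (2 * k + 1) :: e (2 * k + 2) ::
          (List.range (2 * r.length)).map fun j => e (2 * (k + 1) + 1 + j) := by
      simp only [List.length_cons, mul_add, List.range_succ_eq_map, mul_one]
      simp [Function.comp_def]
      intros; congr 1; omega
    rw [this]
    simp only [blk, List.flatten_cons]
    grind

theorem perm_canonList (e : ℕ → ℕ) (g : ℕ) (L : List (List ℕ)) (hL : L ≠ []) :
    (canonList L g e).Perm
      (L.flatten ++ (List.range (4 * g + 2 * L.length - 2)).map fun j => e (1 + j)) := by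
  cases L with
  | nil => simp at hL
  | cons C r =>
    rw [canonList_cons]
    have : 4 * g + 2 * (C :: r).length - 2 = 2 * r.length + 4 * g := by simp; omega
    rw [this, List.range_add]
    have h := perm_blk e r 0
    simp only [hnd, List.flatten_cons, List.map_append, List.map_map, Function.comp_def,
      List.append_assoc]
    refine List.Perm.append_left C ?_
    rw [← List.append_assoc]
    refine List.Perm.append (by simpa using h) ?_
    apply List.Perm.of_eq
    apply List.map_congr_left
    intros; congr 1; omega

theorem perm_lab (e : ℕ → ℕ) (b g : ℕ) (hb : 0 < b) :
    (lab (canonPairs b g e)).Perm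
      ((List.range (4 * g + 2 * b - 2)).map fun j => e (1 + j)) := by
  obtain ⟨r, rfl⟩ : ∃ r, b = r + 1 := ⟨b - 1, by omega⟩
  induction g with
  | zero =>
    simp only [canonPairs, Nat.add_sub_cancel]
    apply List.Perm.of_eq
    induction r with
    | zero => simp [lab]
    | succ r ih =>
      have h1 : 4 * 0 + 2 * (r + 1 + 1) - 2 = (4 * 0 + 2 * (r + 1) - 2) + 1 + 1 := by omega
      rw [h1, List.range_succ, List.range_succ, List.range_succ, List.map_append, List.map_append,
        List.map_append, ← ih (by omega)]
      simp [lab]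
      constructor <;> (congr 1; omega)
  | succ g ih =>
    have h1 : 4 * (g + 1) + 2 * (r + 1) - 2 = (4 * g + 2 * (r + 1) - 2) + 4 := by omega
    have h2 : lab (canonPairs (r + 1) (g + 1) e) = lab (canonPairs (r + 1) g e) ++
        [e (2 * r + 1 + 4 * g), e (2 * r + 3 + 4 * g), e (2 * r + 2 + 4 * g),
          e (2 * r + 4 + 4 * g)] := by
      simp [lab, canonPairs, List.range_succ]
      refine ⟨?_, ?_, ?_, ?_⟩ <;> (congr 1)
    rw [h1, h2, List.range_add, List.map_append]
    refine ih.append ?_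
    have h3 : List.map (fun j => e (1 + j))
        (List.map (fun x => 4 * g + 2 * (r + 1) - 2 + x) (List.range 4)) =
        [e (2 * r + 1 + 4 * g), e (2 * r + 2 + 4 * g), e (2 * r + 3 + 4 * g),
          e (2 * r + 4 + 4 * g)] := by
      simp [List.range_succ]
      refine ⟨?_, ?_, ?_, ?_⟩ <;> (congr 1; omega)
    rw [h3]
    exact (List.Perm.swap _ _ _).cons _

theorem valid_canon {e : ℕ → ℕ} {g : ℕ} {L : List (List ℕ)} (hL : QOValid L)
    (he : FreshLabels e (4 * g + 2 * L.length - 2) L.flatten.toFinset) :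
    Valid (canonPairs L.length g e) (canonList L g e) := by
  obtain ⟨h1, h2, h3⟩ := hL
  have pos : 0 < L.length := List.length_pos_iff.2 h1
  have p1 := perm_canonList e g L h1
  have p2 := perm_lab e L.length g pos
  have n2 : ((List.range (4 * g + 2 * L.length - 2)).map fun j => e (1 + j)).Nodup := by
    refine List.Nodup.map_on ?_ List.nodup_range
    intro x hx y hy hxy
    simp only [List.mem_range] at hx hy
    have := he.1 (show 1 + x ∈ Set.Icc 1 _ from ⟨by omega, by omega⟩)
      (show 1 + y ∈ Set.Icc 1 _ from ⟨by omega, by omega⟩) hxy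
    omega
  refine ⟨?_, ?_, p2.nodup_iff.2 n2, ?_⟩
  · intro h
    rw [h] at p1
    have := p1.symm.eq_nil
    rw [List.append_eq_nil_iff, List.flatten_eq_nil_iff] at this
    obtain ⟨C, r, rfl⟩ := List.exists_cons_of_ne_nil h1
    exact h3 C (by simp) (this.1 C (by simp))
  · rw [p1.nodup_iff]
    refine List.Nodup.append h2 n2 ?_
    intro i hi hi'
    simp only [List.mem_map, List.mem_range] at hi'
    obtain ⟨j, hj, rfl⟩ := hi'
    exact he.2 (1 + j) ⟨by omega, by omega⟩ (by simpa using hi)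
  · intro i hi
    rw [p1.mem_iff]
    exact List.mem_append_right _ (p2.mem_iff.1 hi)

theorem hasPairs_canon (e : ℕ → ℕ) (b g : ℕ) : HasPairs (canonPairs b g e) e 0 (b - 1) := by
  intro i _ hi
  simp only [canonPairs, List.mem_append, List.mem_map, List.mem_range]
  exact Or.inl ⟨i, hi, rfl⟩

theorem mov_canon (e : ℕ → ℕ) (b g : ℕ) (hb : 0 < b) :
    Mov f (canonPairs b g e) (hnd e (b - 1) g) := by
  apply mov_hnd
  intro j hj
  simp only [canonPairs, List.mem_append, List.mem_flatten, List.mem_map, List.mem_range]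
  constructor
  · refine Or.inr ⟨_, ⟨j, hj, rfl⟩, ?_⟩
    rw [show 2 * (b - 1) + 1 + 4 * j = 2 * b - 1 + 4 * j by omega,
      show 2 * b - 1 + 4 * j + 2 = 2 * b + 1 + 4 * j by omega]
    simp
  · refine Or.inr ⟨_, ⟨j, hj, rfl⟩, ?_⟩
    rw [show 2 * (b - 1) + 1 + 4 * j + 1 = 2 * b + 4 * j by omega,
      show 2 * (b - 1) + 1 + 4 * j + 3 = 2 * b + 2 + 4 * j by omega]
    simp

/-! change of labels -/

theorem blk_map (e e' : ℕ → ℕ) (ρ : ℕ → ℕ) (r : List (List ℕ)) : ∀ k,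
    (∀ i ∈ r.flatten, ρ i = i) →
    (∀ i, 1 ≤ i → i ≤ 2 * (k + r.length) → ρ (e i) = e' i) →
    (blk e k r).map ρ = blk e' k r := by
  induction r with
  | nil => intros; rfl
  | cons C r ih =>
    intro k h1 h2
    have hC : C.map ρ = C := by
      conv_rhs => rw [← List.map_id C]
      apply List.map_congr_left
      intro i hi
      exact h1 i (by simp [hi])
    simp only [List.length_cons] at h2
    simp only [blk, List.map_append, List.map_cons, List.map_nil, hC]
    rw [ih (k + 1) (fun i hi => h1 i (by rw [List.flatten_cons]; exact List.mem_append_right _ hi))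
      (fun i h3 h4 => h2 i h3 (by omega)), h2 _ (by omega) (by omega), h2 _ (by omega) (by omega)]

theorem canon_relabel {e e' : ℕ → ℕ} {g : ℕ} {L : List (List ℕ)} (hL : QOValid L)
    (he : FreshLabels e (4 * g + 2 * L.length - 2) L.flatten.toFinset)
    (he' : FreshLabels e' (4 * g + 2 * L.length - 2) L.flatten.toFinset) :
    E f (canonPairs L.length g e) (canonList L g e) =
      E f (canonPairs L.length g e') (canonList L g e') := by
  classical
  have v := valid_canon hL he
  obtain ⟨h1, h2, h3⟩ := hL
  have pos : 0 < L.length := List.length_pos_iff.2 h1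
  have p1 := perm_canonList e g L h1
  have p2 := perm_lab e L.length g pos
  set n := 4 * g + 2 * L.length - 2 with hn
  obtain ⟨ρ, r1, r2⟩ : ∃ ρ : ℕ → ℕ, (∀ i ∈ L.flatten, ρ i = i) ∧
      ∀ i, 1 ≤ i → i ≤ n → ρ (e i) = e' i := by
    refine ⟨fun m => if m ∈ L.flatten then m else e' (Function.invFunOn e (Set.Icc 1 n) m),
      fun i hi => by simp only [if_pos hi], fun i hi hi' => ?_⟩
    have : e i ∉ L.flatten := by simpa using he.2 i ⟨hi, hi'⟩
    simp only [if_neg this]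
    rw [he.1.leftInvOn_invFunOn ⟨hi, hi'⟩]
  have mem : ∀ i ∈ canonList L g e, i ∈ L.flatten ∨ ∃ j, 1 ≤ j ∧ j ≤ n ∧ e j = i := by
    intro i hi
    rw [p1.mem_iff, List.mem_append] at hi
    rcases hi with hi | hi
    · exact Or.inl hi
    · simp only [List.mem_map, List.mem_range] at hi
      obtain ⟨j, hj, rfl⟩ := hi
      exact Or.inr ⟨1 + j, by omega, by omega, rfl⟩
  have key := E_relabel f (canonPairs L.length g e) (canonList L g e) ρ v (by
    intro i hi0 j hj0 hij
    rcases mem i hi0 with hi | ⟨i, hi, hi', rfl⟩ <;> rcases mem j hj0 with hj | ⟨j, hj, hj', rfl⟩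
    · rwa [r1 i hi, r1 j hj] at hij
    · rw [r1 i hi, r2 j hj hj'] at hij
      exact absurd (by simpa [← hij] using hi) (he'.2 j ⟨hj, hj'⟩)
    · rw [r1 j hj, r2 i hi hi'] at hij
      exact absurd (by simpa [hij] using hj) (he'.2 i ⟨hi, hi'⟩)
    · rw [r2 i hi hi', r2 j hj hj'] at hij
      rw [he'.1 ⟨hi, hi'⟩ ⟨hj, hj'⟩ hij]) (by
    intro i hi hl
    rcases mem i hi with hi | ⟨i, hi, hi', rfl⟩
    · exact r1 i hi
    · exfalso
      apply hl
      rw [p2.mem_iff]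
      simp only [List.mem_map, List.mem_range]
      exact ⟨i - 1, by omega, by congr 1; omega⟩)
  rw [key]
  congr 1
  · simp only [canonPairs, List.map_append, List.map_map, List.map_flatten]
    congr 1
    · apply List.map_congr_left
      intro i hi
      simp only [List.mem_range] at hi
      simp only [Function.comp]
      rw [r2 _ (by omega) (by omega), r2 _ (by omega) (by omega)]
    · congr 1
      apply List.map_congr_left
      intro i hi
      simp only [List.mem_range] at hi
      simp only [Function.comp, List.map_cons, List.map_nil]
      rw [r2 _ (by omega) (by omega), r2 _ (by omega) (by omega), r2 _ (by omega) (by omega),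
        r2 _ (by omega) (by omega)]
  · obtain ⟨C, r, rfl⟩ := List.exists_cons_of_ne_nil h1
    simp only [List.length_cons] at hn
    rw [canonList_cons, canonList_cons, List.map_append, List.map_append]
    congr 1
    · conv_rhs => rw [← List.map_id C]
      apply List.map_congr_left
      intro i hi
      exact r1 i (by simp [hi])
    · congr 1
      · exact blk_map e e' ρ r 0
          (fun i hi => r1 i (by rw [List.flatten_cons]; exact List.mem_append_right _ hi))
          (fun i h3 h4 => r2 i h3 (by omega))
      · simp only [hnd, List.map_map]
        apply List.map_congr_left
        intro i hi
        simp only [List.mem_range] at hi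
        exact r2 _ (by omega) (by omega)

theorem main (P : ModularOperad) (f : AssMorphism P)
    (L L' : List (List ℕ)) (g : ℕ)
    (hL : QOValid L) (hL' : QOValid L') (hLL' : QOEquiv L L')
    (e e' : ℕ → ℕ)
    (he : FreshLabels e (4 * g + 2 * L.length - 2) L.flatten.toFinset)
    (he' : FreshLabels e' (4 * g + 2 * L'.length - 2) L'.flatten.toFinset) :
    E f (canonPairs L.length g e) (canonList L g e) =
      E f (canonPairs L'.length g e') (canonList L' g e') := by
  obtain ⟨M, hp, hr⟩ := hLL'
  have pos : 0 < L.length := List.length_pos_iff.2 hL.1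
  have l1 := hp.length_eq
  have l2 := hr.length_eq
  have q1 := canon_perm (f := f) (g := g) hp (hasPairs_canon e L.length g)
    (mov_canon e L.length g pos)
  have q2 := canon_rot (f := f) (g := g) (prs := canonPairs L.length g e) (e := e) hr
    (by rw [← l1]; exact hasPairs_canon e L.length g)
    (by rw [← l1]; exact mov_canon e L.length g pos)
  have v := valid_canon hL he
  rw [(q1.trans q2).2 v]
  have hfl : L.flatten.toFinset = L'.flatten.toFinset := by
    rw [List.toFinset_eq_of_perm _ _ hp.flatten]
    have : ∀ {A B : List (List ℕ)}, List.Forall₂ (· ~r ·) A B → A.flatten.Perm B.flatten := by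
      intro A B h
      induction h with
      | nil => exact List.Perm.refl _
      | cons h _ ih => simpa using h.perm.append ih
    rw [List.toFinset_eq_of_perm _ _ (this hr)]
  rw [hfl, l1, l2] at he
  rw [l1, l2]
  exact canon_relabel hL' he he'

end FT

/-- (Lemma 8, well-definedness of `f̃`.)  The value
`ξ_{12}ξ_{34}⋯ξ_{2b+4g-4,2b+4g-2} f(a_q) ∈ P(C,G)` is the same for every
canonical expression of `q`: it does not depend on the choice of fresh labels,
of representing tuples of the cycles, nor of the order of the cycles.
Here `L` and `L'` present the same `q` (same blocks up to permutation and
rotation) and `e`, `e'` are two systems of fresh labels. -/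
theorem ftilde_well_defined (P : ModularOperad) (f : AssMorphism P)
    (L L' : List (List ℕ)) (g : ℕ)
    (hL : QOValid L) (hL' : QOValid L') (hLL' : QOEquiv L L')
    (e e' : ℕ → ℕ)
    (he : FreshLabels e (4 * g + 2 * L.length - 2) L.flatten.toFinset)
    (he' : FreshLabels e' (4 * g + 2 * L'.length - 2) L'.flatten.toFinset) :
    xiChain P (canonPairs L.length g e) (f.f (canonList L g e)) =
      xiChain P (canonPairs L'.length g e') (f.f (canonList L' g e')) := by
  exact FT.main P f L L' g hL hL' hLL' e e' he he'
end

section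
/- Let P be a modular operad in sets and f: Ass → P a morphism of cyclic operads. Let a_q := ⟨C₁ e₁ C₂ e₂ e₃ C₃ e₄ ⋯ Cᵢ ⋯ e_{2b−3} C_b e_{2b−2} e_{2b−1} ⋯ e_{4g+2b−2}⟩ and let a'_q be obtained from a_q by exchanging the blocks C₁ and Cᵢ (2 ≤ i ≤ b), leaving everything else unchanged. Then ξ_{12}ξ_{34}⋯ξ_{2b+4g−4,2b+4g−2} f(a_q) = ξ_{12}ξ_{34}⋯ξ_{2b+4g−4,2b+4g−2} f(a'_q), where ξ_{ij} abbreviates ξ_{e_i e_j} and the string of contractions is the canonical one ξ_{12}⋯ξ_{2b−3,2b−2}ξ_{2b−1,2b+1}⋯ξ_{2b+4g−4,2b+4g−2}. -/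
namespace FX

def labs (S : List (ℕ × ℕ)) : List ℕ := S.flatMap fun p => [p.1, p.2]

theorem labs_append (S T : List (ℕ × ℕ)) : labs (S ++ T) = labs S ++ labs T := by
  simp [labs]

theorem labs_cons (p : ℕ × ℕ) (T : List (ℕ × ℕ)) : labs (p :: T) = p.1 :: p.2 :: labs T := by
  simp [labs]

theorem mem_legs_xiChain (P : ModularOperad) (S : List (ℕ × ℕ)) (x : P.El)
    (h1 : (labs S).Nodup) (h2 : ∀ c ∈ labs S, c ∈ P.legs x) (c : ℕ) :
    c ∈ P.legs (xiChain P S x) ↔ c ∈ P.legs x ∧ c ∉ labs S := by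
  induction S generalizing c with
  | nil => simp [xiChain, labs]
  | cons p S ih =>
    rw [labs_cons] at h1 h2
    simp only [List.nodup_cons, List.mem_cons, not_or] at h1 h2
    have ih' := ih h1.2.2 (fun c hc => h2 c (Or.inr (Or.inr hc)))
    have : xiChain P (p :: S) x = P.xi p.1 p.2 (xiChain P S x) := rfl
    rw [this, P.legs_xi _ _ _ ((ih' _).2 ⟨h2 _ (by simp), h1.1.2⟩)
      ((ih' _).2 ⟨h2 _ (by simp), h1.2.1⟩) h1.1.1, labs_cons]
    simp only [Finset.mem_erase, List.mem_cons, not_or, ih']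
    tauto

theorem xiChain_comm (P : ModularOperad) (S : List (ℕ × ℕ)) (a b : ℕ) (x : P.El)
    (h1 : (labs ((a, b) :: S)).Nodup) (h2 : ∀ c ∈ labs ((a, b) :: S), c ∈ P.legs x) :
    P.xi a b (xiChain P S x) = xiChain P S (P.xi a b x) := by
  induction S with
  | nil => rfl
  | cons p S ih =>
    have e1 : ∀ y, xiChain P (p :: S) y = P.xi p.1 p.2 (xiChain P S y) := fun _ => rfl
    rw [e1, e1]
    simp only [labs_cons, List.nodup_cons, List.mem_cons, not_or] at h1 h2 ih
    have hm := mem_legs_xiChain P S x h1.2.2.2.2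
      (fun c hc => h2 c (by simp [hc]))
    rw [P.xi_xi, ih]
    · tauto
    · intro c hc
      apply h2; tauto
    · exact (hm _).2 ⟨h2 _ (by simp), by tauto⟩
    · exact (hm _).2 ⟨h2 _ (by simp), by tauto⟩
    · exact (hm _).2 ⟨h2 _ (by simp), by tauto⟩
    · exact (hm _).2 ⟨h2 _ (by simp), by tauto⟩
    all_goals tauto

theorem xiChain_pull (P : ModularOperad) (S T : List (ℕ × ℕ)) (a b : ℕ) (x : P.El)
    (h1 : (labs (S ++ (a, b) :: T)).Nodup)
    (h2 : ∀ c ∈ labs (S ++ (a, b) :: T), c ∈ P.legs x) :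
    xiChain P (S ++ (a, b) :: T) x = xiChain P S (xiChain P T (P.xi a b x)) := by
  rw [labs_append] at h1 h2
  rw [← xiChain_comm P T a b x (List.nodup_append.1 h1).2.1
    (fun c hc => h2 c (List.mem_append_right _ hc))]
  simp [xiChain]

theorem key (P : ModularOperad) (f : AssMorphism P) (a b : ℕ) (X1 X2 Y1 Y2 : List ℕ)
    (h : (a :: (X1 ++ Y2) ++ b :: (Y1 ++ X2)).Nodup) :
    P.xi a b (f.f (a :: (X1 ++ Y2) ++ b :: (Y1 ++ X2))) =
      P.xi a b (f.f (a :: (X2 ++ Y1) ++ b :: (Y2 ++ X1))) := by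
  obtain ⟨c, hc⟩ := Infinite.exists_notMem_finset
    (a :: (X1 ++ Y2) ++ b :: (Y1 ++ X2)).toFinset
  obtain ⟨d, hd⟩ := Infinite.exists_notMem_finset
    (c :: a :: (X1 ++ Y2) ++ b :: (Y1 ++ X2)).toFinset
  have hbig : (c :: d :: (a :: (X1 ++ Y2) ++ b :: (Y1 ++ X2))).Nodup := by
    rw [List.nodup_cons, List.nodup_cons]
    refine ⟨?_, ?_, h⟩
    · simp at hc hd ⊢; tauto
    · simp at hc hd ⊢; tauto
  have nd : ∀ l : List ℕ, l.Subperm (c :: d :: (a :: (X1 ++ Y2) ++ b :: (Y1 ++ X2))) →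
      l.Nodup := by
    intro l hl
    obtain ⟨l', hp, hs⟩ := hl
    exact hp.nodup_iff.1 (hbig.sublist hs)
  have ndc : ∀ l : List ℕ, (∀ n, l.count n ≤
      (c :: d :: (a :: (X1 ++ Y2) ++ b :: (Y1 ++ X2))).count n) → l.Nodup := by
    intro l hl
    rw [List.nodup_iff_count_le_one] at hbig ⊢
    intro n
    exact (hl n).trans (hbig n)
  have n1 : (X2 ++ a :: X1 ++ [c]).Nodup := by
    apply ndc; intro n; simp [List.count_cons]; omega
  have n2 : (d :: (Y2 ++ b :: Y1)).Nodup := by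
    apply ndc; intro n; simp [List.count_cons]; omega
  have n3 : ((X2 ++ a :: X1) ++ c :: d :: (Y2 ++ b :: Y1)).Nodup := by
    apply ndc; intro n; simp [List.count_cons]; omega
  have n4 : ((X1 ++ c :: X2) ++ a :: b :: (Y1 ++ d :: Y2)).Nodup := by
    apply ndc; intro n; simp [List.count_cons]; omega
  have n5 : ((X1 ++ c :: X2) ++ (Y1 ++ d :: Y2)).Nodup := by
    apply ndc; intro n; simp [List.count_cons]; omega
  have n6 : (a :: (X2 ++ Y1) ++ b :: (Y2 ++ X1)).Nodup := by
    apply ndc; intro n; simp [List.count_cons]; omega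
  have rx : f.f (X2 ++ a :: X1 ++ [c]) = f.f ((X1 ++ c :: X2) ++ [a]) := by
    apply f.f_rot _ _ (by simp) n1
    have := List.IsRotated.symm (List.isRotated_append (l := X1 ++ [c]) (l' := X2 ++ [a]))
    simpa using this
  have ry : f.f (d :: (Y2 ++ b :: Y1)) = f.f (b :: (Y1 ++ d :: Y2)) := by
    apply f.f_rot _ _ (by simp) n2
    have := (List.isRotated_append (l := d :: Y2) (l' := b :: Y1))
    simpa using this
  have c1 := f.f_comp _ _ _ _ n3 (by simp)
  have c2 := f.f_comp _ _ _ _ n4 (by simp)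
  have lx := f.legs_f _ (by simp) n1
  have ly := f.legs_f _ (by simp) n2
  have hne : a ≠ c ∧ b ≠ d ∧ a ≠ b ∧ c ≠ d := by
    simp at hbig; tauto
  have ex := P.xi_comp_exchange a b c d (f.f (X2 ++ a :: X1 ++ [c])) (f.f (d :: (Y2 ++ b :: Y1)))
    (by rw [lx]; simp) (by rw [lx]; simp) (by simp [ly]) (by simp [ly]) hne.1 hne.2.1
    (by
      rw [lx, ly, List.disjoint_toFinset_iff_disjoint]
      apply List.disjoint_of_nodup_append
      simpa using n3)
  rw [c1] at ex
  rw [rx, ry, c2] at ex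
  have r1 : f.f (a :: (X1 ++ Y2) ++ b :: (Y1 ++ X2)) =
      f.f (X2 ++ a :: X1 ++ (Y2 ++ b :: Y1)) := by
    apply f.f_rot _ _ (by simp) h
    have := (List.isRotated_append (l := a :: (X1 ++ Y2) ++ b :: Y1) (l' := X2))
    simpa using this
  rw [r1, ex]
  -- relabel
  let ρ : ℕ → ℕ := fun n => if n = c then a else if n = d then b else n
  have lw := f.legs_f _ (by simp) n5
  have hfix : ∀ n, n ≠ c → n ≠ d → ρ n = n := by
    intro n h1 h2; simp [ρ, h1, h2]
  have hρc : ρ c = a := by simp [ρ]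
  have hρd : ρ d = b := by simp [ρ, hne.2.2.2.symm]
  have hin : Set.InjOn ρ (((X1 ++ c :: X2) ++ (Y1 ++ d :: Y2)).toFinset : Set ℕ) := by
    have hna : a ∉ ((X1 ++ c :: X2) ++ (Y1 ++ d :: Y2)) := by
      have := (List.nodup_middle.1 n4)
      rw [List.nodup_cons] at this
      intro h'; apply this.1
      simp at h' ⊢; tauto
    have hnb : b ∉ ((X1 ++ c :: X2) ++ (Y1 ++ d :: Y2)) := by
      have := (List.nodup_middle.1 n4)
      rw [List.nodup_cons] at this
      have := (List.nodup_middle.1 this.2)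
      rw [List.nodup_cons] at this
      exact this.1
    intro m hm n hn hmn
    have hm' : m ∈ ((X1 ++ c :: X2) ++ (Y1 ++ d :: Y2)) := List.mem_toFinset.1 (Finset.mem_coe.1 hm)
    have hn' : n ∈ ((X1 ++ c :: X2) ++ (Y1 ++ d :: Y2)) := List.mem_toFinset.1 (Finset.mem_coe.1 hn)
    have ma : m ≠ a := fun h => hna (h ▸ hm')
    have mb : m ≠ b := fun h => hnb (h ▸ hm')
    have na : n ≠ a := fun h => hna (h ▸ hn')
    have nb : n ≠ b := fun h => hnb (h ▸ hn')
    have := hne.2.2.1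
    simp only [ρ] at hmn
    split_ifs at hmn <;> grind
  have hmap : ((X1 ++ c :: X2) ++ (Y1 ++ d :: Y2)).map ρ =
      (X1 ++ a :: X2) ++ (Y1 ++ b :: Y2) := by
    have hh : ∀ l : List ℕ, (∀ n ∈ l, n ≠ c ∧ n ≠ d) → l.map ρ = l := by
      intro l hl
      conv_rhs => rw [← List.map_id l]
      apply List.map_congr_left
      intro n hn
      exact hfix n (hl n hn).1 (hl n hn).2
    have hcd : ∀ n ∈ X1 ++ X2 ++ Y1 ++ Y2, n ≠ c ∧ n ≠ d := by
      simp only [List.nodup_cons] at hbig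
      intro n hn
      constructor
      · rintro rfl; apply hbig.1; simp at hn ⊢; tauto
      · rintro rfl; apply hbig.2.1; simp at hn ⊢; tauto
    simp only [List.map_append, List.map_cons, hρc, hρd]
    rw [hh X1, hh X2, hh Y1, hh Y2] <;>
    · intro n hn; apply hcd; simp [hn]
  have hcm : c ∈ P.legs (f.f ((X1 ++ c :: X2) ++ (Y1 ++ d :: Y2))) := by rw [lw]; simp
  have hdm : d ∈ P.legs (f.f ((X1 ++ c :: X2) ++ (Y1 ++ d :: Y2))) := by rw [lw]; simp
  have ac := f.f_act ρ _ (by simp) n5 hin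
  have ax := P.act_xi ρ c d (f.f ((X1 ++ c :: X2) ++ (Y1 ++ d :: Y2))) hcm hdm hne.2.2.2
    (by rw [lw]; exact hin)
  have aid : P.act ρ (P.xi c d (f.f ((X1 ++ c :: X2) ++ (Y1 ++ d :: Y2)))) =
      P.xi c d (f.f ((X1 ++ c :: X2) ++ (Y1 ++ d :: Y2))) := by
    rw [P.act_congr ρ id, P.act_id]
    intro n hn
    rw [P.legs_xi _ _ _ hcm hdm hne.2.2.2] at hn
    simp only [Finset.mem_erase] at hn
    exact hfix n hn.2.1 hn.1
  rw [← aid, ax, ← ac, hmap, hρc, hρd]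
  congr 1
  symm
  apply f.f_rot _ _ (by simp) n6
  have := (List.isRotated_append (l := a :: (X2 ++ Y1) ++ b :: Y2) (l' := X1))
  simpa using this

def Good (S : List (ℕ × ℕ)) (l : List ℕ) : Prop :=
  l ≠ [] ∧ l.Nodup ∧ (labs S).Nodup ∧ ∀ c ∈ labs S, c ∈ l

theorem Good.perm {S : List (ℕ × ℕ)} {l l' : List ℕ} (h : Good S l) (hp : l.Perm l') :
    Good S l' := by
  refine ⟨?_, hp.nodup_iff.1 h.2.1, h.2.2.1, fun c hc => hp.mem_iff.1 (h.2.2.2 c hc)⟩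
  rintro rfl
  exact h.1 hp.eq_nil

/-- `l` is good and equivalent to `l'`. -/
def Rel {P : ModularOperad} (f : AssMorphism P) (S : List (ℕ × ℕ)) (l l' : List ℕ) : Prop :=
  Good S l → l.Perm l' ∧ xiChain P S (f.f l) = xiChain P S (f.f l')

section
variable {P : ModularOperad} {f : AssMorphism P} {S : List (ℕ × ℕ)}

theorem Rel.trans {l l' l'' : List ℕ} (h : Rel f S l l') (h' : Rel f S l' l'') :
    Rel f S l l'' := fun g =>
  have a := h g
  have b := h' (g.perm a.1)
  ⟨a.1.trans b.1, a.2.trans b.2⟩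

theorem Rel.rot {l l' : List ℕ} (h : l ~r l') : Rel f S l l' := fun g =>
  ⟨h.perm, by rw [f.f_rot _ _ g.1 g.2.1 h]⟩

theorem rotApp (A B : List ℕ) : Rel f S (A ++ B) (B ++ A) := Rel.rot List.isRotated_append

theorem Rel.key {a b : ℕ} (hab : (a, b) ∈ S) (X1 X2 Y1 Y2 : List ℕ) :
    Rel f S (a :: (X1 ++ Y2) ++ b :: (Y1 ++ X2)) (a :: (X2 ++ Y1) ++ b :: (Y2 ++ X1)) := by
  intro g
  have hp : (a :: (X1 ++ Y2) ++ b :: (Y1 ++ X2)).Perm (a :: (X2 ++ Y1) ++ b :: (Y2 ++ X1)) := by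
    rw [List.perm_iff_count]; intro n; simp [List.count_cons]; omega
  refine ⟨hp, ?_⟩
  have g' := g.perm hp
  obtain ⟨s, t, rfl⟩ := List.append_of_mem hab
  rw [xiChain_pull, xiChain_pull, FX.key P f a b X1 X2 Y1 Y2 g.2.1]
  · exact g.2.2.1
  · intro c hc
    rw [f.legs_f _ g'.1 g'.2.1, List.mem_toFinset]
    exact g'.2.2.2 c hc
  · exact g.2.2.1
  · intro c hc
    rw [f.legs_f _ g.1 g.2.1, List.mem_toFinset]
    exact g.2.2.2 c hc

theorem Rel.swap {a b : ℕ} (hab : (a, b) ∈ S) (X Y : List ℕ) :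
    Rel f S (a :: X ++ b :: Y) (a :: Y ++ b :: X) := by
  simpa using Rel.key hab X [] Y []

/-- rotate both cycles -/
theorem Rel.turn {a b : ℕ} (hab : (a, b) ∈ S) (X1 X2 Y1 Y2 : List ℕ) :
    Rel f S (a :: (X1 ++ X2) ++ b :: (Y1 ++ Y2)) (a :: (X2 ++ X1) ++ b :: (Y2 ++ Y1)) :=
  (Rel.key hab X1 Y2 Y1 X2).trans (Rel.swap hab _ _)

variable (f S) in
def Mov (B : List ℕ) : Prop := ∀ Q1 Q2, Rel f S (B ++ (Q1 ++ Q2)) (B ++ (Q2 ++ Q1))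

theorem Mov.nil : Mov f S [] := fun Q1 Q2 => by simpa using rotApp Q1 Q2

theorem Mov.app {A B : List ℕ} (hA : Mov f S A) (hB : Mov f S B) : Mov f S (A ++ B) := by
  intro Q1 Q2
  have h1 : Rel f S (A ++ B ++ (Q1 ++ Q2)) (B ++ (Q1 ++ (Q2 ++ A))) := by
    simpa using rotApp (f := f) (S := S) A (B ++ (Q1 ++ Q2))
  have h2 : Rel f S (B ++ (Q1 ++ (Q2 ++ A))) (B ++ ((Q2 ++ A) ++ Q1)) := hB _ _
  have h3 : Rel f S (B ++ ((Q2 ++ A) ++ Q1)) (A ++ (Q1 ++ (B ++ Q2))) := by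
    simpa using rotApp (f := f) (S := S) (B ++ Q2) (A ++ Q1)
  have h4 : Rel f S (A ++ (Q1 ++ (B ++ Q2))) (A ++ ((B ++ Q2) ++ Q1)) := hA _ _
  simpa using h1.trans (h2.trans (h3.trans h4))

theorem Mov.flatten {Ls : List (List ℕ)} (h : ∀ B ∈ Ls, Mov f S B) : Mov f S Ls.flatten := by
  induction Ls with
  | nil => exact Mov.nil
  | cons B Ls ih =>
    rw [List.flatten_cons]
    exact (h B (by simp)).app (ih fun B hB => h B (by simp [hB]))

theorem Mov.block {a b : ℕ} (hab : (a, b) ∈ S) (C : List ℕ) : Mov f S (a :: (C ++ [b])) := by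
  intro Q1 Q2
  simpa using Rel.turn (f := f) hab C [] Q1 Q2

theorem Mov.handle {a b c d : ℕ} (hac : (a, c) ∈ S) (hbd : (b, d) ∈ S) :
    Mov f S [a, b, c, d] := by
  intro Q1 Q2
  have h1 : Rel f S (a :: b :: c :: d :: (Q1 ++ Q2)) (a :: b :: c :: (Q2 ++ d :: Q1)) := by
    simpa using Rel.turn (f := f) hac [b] [] (d :: Q1) Q2
  have h2 : Rel f S (a :: b :: c :: (Q2 ++ d :: Q1)) (b :: c :: (Q2 ++ d :: (Q1 ++ [a]))) := by
    simpa using rotApp (f := f) (S := S) [a] (b :: c :: (Q2 ++ d :: Q1))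
  have h3 : Rel f S (b :: c :: (Q2 ++ d :: (Q1 ++ [a]))) (b :: (Q2 ++ c :: d :: (Q1 ++ [a]))) := by
    simpa using Rel.turn (f := f) hbd [c] Q2 (Q1 ++ [a]) []
  have h4 : Rel f S (b :: (Q2 ++ c :: d :: (Q1 ++ [a]))) (a :: b :: (Q2 ++ c :: d :: Q1)) := by
    simpa using rotApp (f := f) (S := S) (b :: (Q2 ++ c :: d :: Q1)) [a]
  have h5 : Rel f S (a :: b :: (Q2 ++ c :: d :: Q1)) (a :: (Q2 ++ b :: c :: d :: Q1)) := by
    simpa using Rel.turn (f := f) hac [b] Q2 (d :: Q1) []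
  have h6 : Rel f S (a :: (Q2 ++ b :: c :: d :: Q1)) (b :: c :: d :: (Q1 ++ a :: Q2)) := by
    simpa using rotApp (f := f) (S := S) (a :: Q2) (b :: c :: d :: Q1)
  have h7 : Rel f S (b :: c :: d :: (Q1 ++ a :: Q2)) (b :: c :: d :: (Q2 ++ Q1) ++ [a]) := by
    simpa using Rel.turn (f := f) hbd [c] [] (Q1 ++ [a]) Q2
  have h8 : Rel f S (b :: c :: d :: (Q2 ++ Q1) ++ [a]) ([a, b, c, d] ++ (Q2 ++ Q1)) := by
    simpa using rotApp (f := f) (S := S) (b :: c :: d :: (Q2 ++ Q1)) [a]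
  exact h1.trans (h2.trans (h3.trans (h4.trans (h5.trans (h6.trans (h7.trans h8))))))

theorem exchange {a b : ℕ} (hab : (a, b) ∈ S) (C D M K : List ℕ) (hM : Mov f S M)
    (hK : Mov f S K) :
    Rel f S (C ++ M ++ (a :: (D ++ [b])) ++ K) (D ++ M ++ (a :: (C ++ [b])) ++ K) := by
  have h1 : Rel f S (C ++ M ++ (a :: (D ++ [b])) ++ K) (M ++ ((a :: D) ++ (b :: K ++ C))) := by
    simpa using rotApp (f := f) (S := S) C (M ++ (a :: (D ++ [b])) ++ K)
  have h2 := hM (a :: D) (b :: K ++ C)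
  have h3 : Rel f S (M ++ ((b :: K ++ C) ++ a :: D)) (a :: (D ++ M) ++ b :: (K ++ C)) := by
    simpa using rotApp (f := f) (S := S) (M ++ (b :: K ++ C)) (a :: D)
  have h4 := Rel.swap (f := f) hab (D ++ M) (K ++ C)
  have h5 : Rel f S (a :: (K ++ C) ++ b :: (D ++ M)) (K ++ ((C ++ [b]) ++ (D ++ M ++ [a]))) := by
    simpa using rotApp (f := f) (S := S) [a] (K ++ C ++ b :: (D ++ M))
  have h6 := hK (C ++ [b]) (D ++ M ++ [a])
  have h7 : Rel f S (K ++ ((D ++ M ++ [a]) ++ (C ++ [b])))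
      (D ++ M ++ (a :: (C ++ [b])) ++ K) := by
    simpa using rotApp (f := f) (S := S) K ((D ++ M ++ [a]) ++ (C ++ [b]))
  exact h1.trans (h2.trans (h3.trans (h4.trans (h5.trans (h6.trans h7)))))

end

def blk (e : ℕ → ℕ) (p : List ℕ × ℕ) : List ℕ := e (2 * p.2 + 1) :: (p.1 ++ [e (2 * p.2 + 2)])

theorem blk_perm (e : ℕ → ℕ) (L : List (List ℕ)) (k : ℕ) :
    (((L.zipIdx k).map (blk e)).flatten).Perm
      (L.flatten ++ (List.range' (2 * k + 1) (2 * L.length)).map e) := by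
  induction L generalizing k with
  | nil => simp
  | cons C L ih =>
    have := ih (k + 1)
    rw [List.perm_iff_count] at this ⊢
    intro n
    have hn := this n
    have : 2 * (C :: L).length = 2 * L.length + 1 + 1 := by simp; ring
    rw [this, List.range'_succ, List.range'_succ]
    have e1 : 2 * (k + 1) + 1 = 2 * k + 1 + 1 + 1 := by ring
    rw [e1] at hn
    have e2 : 2 * k + 1 + 1 = 2 * k + 2 := rfl
    rw [e2] at hn ⊢
    simp [blk, List.count_cons] at hn ⊢
    omega

theorem handles_eq (g k : ℕ) (e : ℕ → ℕ) :
    ((List.range (4 * g)).map fun j => e (k + j)) =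
      ((List.range g).map fun j =>
        [e (k + 4 * j), e (k + 1 + 4 * j), e (k + 2 + 4 * j), e (k + 3 + 4 * j)]).flatten := by
  induction g with
  | zero => rfl
  | succ g ih =>
    have : 4 * (g + 1) = 4 * g + 1 + 1 + 1 + 1 := by ring
    rw [this]
    simp only [List.range_succ, List.map_append, List.flatten_append, ih]
    simp
    refine ⟨?_, ?_, ?_⟩ <;> congr 1 <;> ring

theorem labs1 (n : ℕ) (e : ℕ → ℕ) :
    labs ((List.range n).map fun i => (e (2 * i + 1), e (2 * i + 2))) =
      (List.range' 1 (2 * n)).map e := by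
  induction n with
  | zero => rfl
  | succ n ih =>
    have : 2 * (n + 1) = 2 * n + 1 + 1 := by ring
    rw [this, List.range'_1_concat, List.range'_1_concat, List.range_succ, List.map_append,
      labs_append, ih]
    simp [labs]
    constructor <;> congr 1 <;> ring

theorem labs2 (g k : ℕ) (e : ℕ → ℕ) :
    (labs ((List.range g).map fun j =>
      [(e (k + 4 * j), e (k + 2 + 4 * j)),
       (e (k + 1 + 4 * j), e (k + 3 + 4 * j))]).flatten).Perm
    ((List.range' k (4 * g)).map e) := by
  rw [List.range'_eq_map_range, List.map_map]
  have := handles_eq g k e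
  have h2 : (List.map (e ∘ fun x => k + x) (List.range (4 * g))) = 
    ((List.range (4 * g)).map fun j => e (k + j)) := rfl
  rw [h2, this]
  clear this h2
  induction g with
  | zero => simp [labs]
  | succ g ih =>
    simp only [List.range_succ, List.map_append, List.flatten_append, labs_append]
    refine ih.append ?_
    simp [labs]
    apply List.Perm.swap

theorem canonPairs_eq (n g : ℕ) (e : ℕ → ℕ) : canonPairs (n + 1) g e =
    ((List.range n).map fun i => (e (2 * i + 1), e (2 * i + 2))) ++
    ((List.range g).map fun j =>
      [(e (2 * n + 1 + 4 * j), e (2 * n + 1 + 2 + 4 * j)),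
       (e (2 * n + 1 + 1 + 4 * j), e (2 * n + 1 + 3 + 4 * j))]).flatten := by
  rfl

theorem labs_canon (n g : ℕ) (e : ℕ → ℕ) :
    (labs (canonPairs (n + 1) g e)).Perm ((List.range' 1 (2 * n + 4 * g)).map e) := by
  rw [canonPairs_eq, labs_append, labs1, ← List.range'_append_1, List.map_append]
  refine List.Perm.append_left _ ?_
  rw [add_comm 1]
  exact labs2 g (2 * n + 1) e

theorem canonList_eq (C : List ℕ) (L : List (List ℕ)) (g : ℕ) (e : ℕ → ℕ) :
    canonList (C :: L) g e = C ++ (L.zipIdx.map (blk e)).flatten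
      ++ ((List.range (4 * g)).map fun j => e (2 * L.length + 1 + j)) := rfl

theorem canon_perm (C : List ℕ) (L : List (List ℕ)) (g : ℕ) (e : ℕ → ℕ) :
    (canonList (C :: L) g e).Perm
      ((C :: L).flatten ++ (List.range' 1 (2 * L.length + 4 * g)).map e) := by
  rw [canonList_eq, ← List.range'_append_1, List.map_append, List.flatten_cons,
    ← List.append_assoc, List.append_assoc C L.flatten]
  refine List.Perm.append ?_ ?_
  · simpa using (blk_perm e L 0).append_left C
  · rw [List.range'_eq_map_range, List.map_map, add_comm 1]
    rfl

theorem good_canon (C : List ℕ) (L : List (List ℕ)) (g : ℕ) (e : ℕ → ℕ)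
    (hL : QOValid (C :: L))
    (he : FreshLabels e (4 * g + 2 * (C :: L).length - 2) (C :: L).flatten.toFinset) :
    Good (canonPairs (C :: L).length g e) (canonList (C :: L) g e) := by
  have hn : 4 * g + 2 * (C :: L).length - 2 = 2 * L.length + 4 * g := by
    simp; omega
  rw [hn] at he
  have hp := canon_perm C L g e
  have hl := labs_canon L.length g e
  obtain ⟨h1, h2, h3⟩ := hL
  have hnd : ((List.range' 1 (2 * L.length + 4 * g)).map e).Nodup := by
    apply List.Nodup.map_on _ (List.nodup_range')
    intro x hx y hy hxy
    apply he.1 _ _ hxy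
    · simp at hx ⊢; omega
    · simp at hy ⊢; omega
  refine ⟨?_, ?_, ?_, ?_⟩
  · have := h3 C (by simp)
    rw [canonList_eq]
    simp [this]
  · rw [hp.nodup_iff, List.nodup_append]
    refine ⟨h2, hnd, ?_⟩
    intro a ha b hb hab
    subst hab
    rw [List.mem_map] at hb
    obtain ⟨i, hi, rfl⟩ := hb
    apply he.2 i
    · simp at hi ⊢; omega
    · rw [List.mem_toFinset]; exact ha
  · exact hl.nodup_iff.2 hnd
  · intro c hc
    rw [hp.mem_iff]
    exact List.mem_append_right _ (hl.mem_iff.1 hc)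

end FX

/-- (First half of the proof of Lemma 8.)  Exchanging the
blocks `C₁` and `Cᵢ` in `a_q`, keeping everything else unchanged, does not
change the contracted element
`ξ_{12}ξ_{34}⋯ξ_{2b+4g-4,2b+4g-2} f(a_q)`. -/
theorem ftilde_exchange_blocks (P : ModularOperad) (f : AssMorphism P)
    (C₁ Ci : List ℕ) (M N : List (List ℕ)) (g : ℕ) (e : ℕ → ℕ)
    (hL : QOValid (C₁ :: (M ++ Ci :: N)))
    (he : FreshLabels e (4 * g + 2 * (C₁ :: (M ++ Ci :: N)).length - 2)
      (C₁ :: (M ++ Ci :: N)).flatten.toFinset) :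
    xiChain P (canonPairs (C₁ :: (M ++ Ci :: N)).length g e)
        (f.f (canonList (C₁ :: (M ++ Ci :: N)) g e)) =
      xiChain P (canonPairs (C₁ :: (M ++ Ci :: N)).length g e)
        (f.f (canonList (Ci :: (M ++ C₁ :: N)) g e)) := by
  have hg := FX.good_canon C₁ (M ++ Ci :: N) g e hL he
  have hpair : ∀ k < (M ++ Ci :: N).length, (e (2 * k + 1), e (2 * k + 2)) ∈
      canonPairs (C₁ :: (M ++ Ci :: N)).length g e := by
    intro k hk
    rw [List.length_cons, FX.canonPairs_eq]
    exact List.mem_append_left _ (List.mem_map.2 ⟨k, List.mem_range.2 hk, rfl⟩)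
  have hblk : ∀ (L : List (List ℕ)) (k : ℕ), k + L.length ≤ (M ++ Ci :: N).length →
      FX.Mov f (canonPairs (C₁ :: (M ++ Ci :: N)).length g e)
        ((L.zipIdx k).map (FX.blk e)).flatten := by
    intro L k hk
    apply FX.Mov.flatten
    intro B hB
    obtain ⟨⟨D, m⟩, hp, rfl⟩ := List.mem_map.1 hB
    have hm := List.mem_zipIdx hp
    exact FX.Mov.block (hpair m (by omega)) D
  have hhan : FX.Mov f (canonPairs (C₁ :: (M ++ Ci :: N)).length g e)
      ((List.range (4 * g)).map fun j => e (2 * (M ++ Ci :: N).length + 1 + j)) := by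
    rw [FX.handles_eq]
    apply FX.Mov.flatten
    intro B hB
    obtain ⟨j, hj, rfl⟩ := List.mem_map.1 hB
    apply FX.Mov.handle
    · rw [List.length_cons, FX.canonPairs_eq]
      exact List.mem_append_right _ (List.mem_flatten.2 ⟨_, List.mem_map.2 ⟨j, hj, rfl⟩, by simp⟩)
    · rw [List.length_cons, FX.canonPairs_eq]
      exact List.mem_append_right _ (List.mem_flatten.2 ⟨_, List.mem_map.2 ⟨j, hj, rfl⟩, by simp⟩)
  have hx := FX.exchange (hpair M.length (by simp)) C₁ Ci
    ((M.zipIdx 0).map (FX.blk e)).flatten _ (hblk M 0 (by simp))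
    ((hblk N (M.length + 1) (by simp; omega)).app hhan)
  have e1 : ∀ A B : List ℕ, canonList (A :: (M ++ B :: N)) g e =
      A ++ ((M.zipIdx 0).map (FX.blk e)).flatten ++
        (e (2 * M.length + 1) :: (B ++ [e (2 * M.length + 2)])) ++
        (((N.zipIdx (M.length + 1)).map (FX.blk e)).flatten ++
          ((List.range (4 * g)).map fun j => e (2 * (M ++ Ci :: N).length + 1 + j))) := by
    intro A B
    rw [FX.canonList_eq, List.zipIdx_append, List.zipIdx_cons]
    simp [FX.blk]
  rw [← e1, ← e1] at hx
  exact (hx hg).2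
end

section
/- Let P be a modular operad in sets and f: Ass → P a morphism of cyclic operads. Let a_q := ⟨C₁ e₁ C₂ e₂ e₃ C₃ e₄ ⋯ e_{2b−3} C_b e_{2b−2} e_{2b−1} ⋯ e_{4g+2b−2}⟩ with C₁ = (c¹₁,…,c¹ₖ), and let a'_q be obtained from a_q by replacing C₁ with its cyclic rotation C'₁ := (c¹₂,…,c¹ₖ,c¹₁), leaving everything else unchanged. Then ξ_{12}ξ_{34}⋯ξ_{2b+4g−4,2b+4g−2} f(a_q) = ξ_{12}ξ_{34}⋯ξ_{2b+4g−4,2b+4g−2} f(a'_q), where ξ_{ij} abbreviates ξ_{e_i e_j} and the string of contractions is the canonical one ξ_{12}⋯ξ_{2b−3,2b−2}ξ_{2b−1,2b+1}⋯ξ_{2b+4g−4,2b+4g−2}. -/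
/-- All labels occurring in a list of pairs. -/
def lbl : List (ℕ × ℕ) → List ℕ
  | [] => []
  | p :: t => p.1 :: p.2 :: lbl t

theorem lbl_append (s t : List (ℕ × ℕ)) : lbl (s ++ t) = lbl s ++ lbl t := by
  induction s with
  | nil => rfl
  | cons p s ih => simp [lbl, ih]

theorem lbl_perm {s t : List (ℕ × ℕ)} (h : s.Perm t) : (lbl s).Perm (lbl t) := by
  induction h with
  | nil => exact List.Perm.refl _
  | cons x _ ih => exact (ih.cons _).cons _
  | swap x y l =>
    simp only [lbl]
    have := (List.perm_append_comm (l₁ := [y.1, y.2]) (l₂ := [x.1, x.2])).append_right (lbl l)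
    simpa using this
  | trans _ _ h1 h2 => exact h1.trans h2

theorem legs_chain (P : ModularOperad) (prs : List (ℕ × ℕ)) (x : P.El)
    (hn : (lbl prs).Nodup) (hs : ∀ a ∈ lbl prs, a ∈ P.legs x) :
    ∀ a ∈ P.legs x, a ∉ lbl prs → a ∈ P.legs (xiChain P prs x) := by
  induction prs with
  | nil => intro a ha _; exact ha
  | cons p t ih =>
    simp only [lbl, List.nodup_cons, List.mem_cons, not_or] at hn hs
    have ih' := ih hn.2.2 (fun a ha => hs a (Or.inr (Or.inr ha)))
    intro a ha hna
    simp only [lbl, List.mem_cons, not_or] at hna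
    change a ∈ P.legs (P.xi p.1 p.2 (xiChain P t x))
    rw [P.legs_xi _ _ _ (ih' _ (hs _ (Or.inl rfl)) hn.1.2)
      (ih' _ (hs _ (Or.inr (Or.inl rfl))) hn.2.1) hn.1.1]
    simp only [Finset.mem_erase]
    exact ⟨hna.2.1, hna.1, ih' a ha hna.2.2⟩

theorem chain_perm (P : ModularOperad) {s t : List (ℕ × ℕ)} (h : s.Perm t) (x : P.El)
    (hn : (lbl s).Nodup) (hs : ∀ a ∈ lbl s, a ∈ P.legs x) :
    xiChain P s x = xiChain P t x := by
  induction h with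
  | nil => rfl
  | cons p _ ih =>
    simp only [lbl, List.nodup_cons, List.mem_cons, not_or] at hn hs
    have := ih hn.2.2 (fun a ha => hs a (Or.inr (Or.inr ha)))
    change P.xi _ _ (xiChain P _ x) = P.xi _ _ (xiChain P _ x)
    rw [this]
  | swap p q l =>
    simp only [lbl, List.nodup_cons, List.mem_cons, not_or] at hn hs
    obtain ⟨⟨h1, h2, h3, h4⟩, ⟨h5, h6, h7⟩, ⟨h8, h9⟩, h10, h11⟩ := hn
    have := legs_chain P l x h11 (fun a ha => hs a (by simp [ha]))
    change P.xi _ _ (P.xi _ _ (xiChain P _ x)) = P.xi _ _ (P.xi _ _ (xiChain P _ x))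
    exact P.xi_xi _ _ _ _ _ (this _ (hs _ (by simp)) h4) (this _ (hs _ (by simp)) h7)
      (this _ (hs _ (by simp)) h9) (this _ (hs _ (by simp)) h10) h1 h8 h2 h3 h5 h6
  | trans h1 _ ih1 ih2 =>
    rw [ih1 hn hs]
    exact ih2 ((lbl_perm h1).nodup_iff.1 hn) (fun a ha => hs a ((lbl_perm h1).mem_iff.2 ha))

theorem jump (P : ModularOperad) (f : AssMorphism P) (c p q : ℕ) (U V : List ℕ)
    (hn : (c :: p :: (U ++ q :: V)).Nodup) :
    P.xi p q (f.f (c :: p :: (U ++ q :: V))) = P.xi p q (f.f (p :: (U ++ q :: c :: V))) := by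
  obtain ⟨x, hx⟩ := Infinite.exists_notMem_finset (c :: p :: (U ++ q :: V)).toFinset
  obtain ⟨y, hy⟩ := Infinite.exists_notMem_finset (x :: c :: p :: (U ++ q :: V)).toFinset
  simp only [List.mem_toFinset, List.mem_cons, List.mem_append, not_or] at hx hy
  have hn0 := hn
  simp only [List.nodup_cons, List.nodup_append, List.mem_cons, List.mem_append, not_or] at hn
  have r1 : f.f (c :: p :: (U ++ q :: V)) = f.f ((q :: V) ++ (c :: p :: U)) := by
    apply f.f_rot _ _ (by simp) hn0
    simpa using (List.isRotated_append (l := c :: p :: U) (l' := q :: V))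
  have n1 : ((q :: V) ++ x :: y :: (c :: p :: U)).Nodup := by
    simp only [List.nodup_cons, List.nodup_append, List.mem_cons, List.mem_append, not_or]
    grind
  have n2 : ((q :: V) ++ [x]).Nodup := by
    simp only [List.nodup_cons, List.nodup_append, List.mem_cons, List.mem_append, not_or]
    grind
  have n3 : (y :: c :: p :: U).Nodup := by
    simp only [List.nodup_cons, List.mem_cons, not_or]
    grind
  have n4 : ((V ++ [x]) ++ q :: p :: (U ++ [y, c])).Nodup := by
    refine List.Perm.nodup ?_ n1
    rw [List.perm_iff_count]
    intro a
    simp only [List.count_append, List.count_cons, List.count_nil]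
    omega
  have n5 : (V ++ [x] ++ (U ++ [y, c])).Nodup :=
    n4.sublist (List.Sublist.append_left
      ((List.sublist_cons_self p _).trans (List.sublist_cons_self q _)) _)
  rw [r1, ← f.f_comp (q :: V) (c :: p :: U) x y n1 (by simp), P.xi_symm p q]
  have L1 := f.legs_f _ (by simp) n2
  have L2 := f.legs_f _ (by simp) n3
  rw [P.xi_comp_exchange q p x y _ _ (by rw [L1]; simp) (by rw [L1]; simp)
    (by rw [L2]; simp) (by rw [L2]; simp) (by grind) (by grind)
    (by
      rw [L1, L2, Finset.disjoint_left]
      simp only [List.mem_toFinset, List.mem_cons, List.mem_append, not_or]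
      grind)]
  have r2 : f.f (q :: V ++ [x]) = f.f ((V ++ [x]) ++ [q]) := by
    apply f.f_rot _ _ (by simp) n2
    simpa using (List.isRotated_append (l := [q]) (l' := V ++ [x]))
  have r3 : f.f (y :: c :: p :: U) = f.f (p :: (U ++ [y, c])) := by
    apply f.f_rot _ _ (by simp) n3
    simpa using (List.isRotated_append (l := [y, c]) (l' := p :: U))
  rw [r2, r3, f.f_comp _ _ q p n4 (by simp)]
  have L3 := f.legs_f _ (by simp) n5
  let ρ : ℕ → ℕ := fun n => if n = x then p else if n = y then q else n
  have hρ : Set.InjOn ρ ((V ++ [x] ++ (U ++ [y, c])).toFinset : Set ℕ) := by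
    intro a ha b hb hab
    simp only [Finset.mem_coe, List.mem_toFinset, List.mem_cons, List.mem_append] at ha hb
    simp only [ρ] at hab
    grind
  have hmem : x ∈ P.legs (f.f (V ++ [x] ++ (U ++ [y, c]))) := by rw [L3]; simp
  have hmem' : y ∈ P.legs (f.f (V ++ [x] ++ (U ++ [y, c]))) := by rw [L3]; simp
  have hxy : x ≠ y := by grind
  have e1 := P.act_xi ρ x y _ hmem hmem' hxy (by rw [L3]; exact hρ)
  have e2 : P.act ρ (P.xi x y (f.f (V ++ [x] ++ (U ++ [y, c])))) =
      P.xi x y (f.f (V ++ [x] ++ (U ++ [y, c]))) := by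
    rw [P.act_congr ρ id, P.act_id]
    intro a ha
    rw [P.legs_xi _ _ _ hmem hmem' hxy] at ha
    simp only [Finset.mem_erase] at ha
    simp [ρ, ha.1, ha.2.1]
  rw [← e2, e1, ← f.f_act ρ _ (by simp) n5 hρ]
  have hx' : ρ x = p := by simp [ρ]
  have hy' : ρ y = q := by simp [ρ, hxy.symm]
  have hm : ∀ W : List ℕ, x ∉ W → y ∉ W → W.map ρ = W := by
    intro W h1 h2
    conv_rhs => rw [← List.map_id W]
    apply List.map_congr_left
    intro a ha
    have h3 : a ≠ x := fun h => h1 (h ▸ ha)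
    have h4 : a ≠ y := fun h => h2 (h ▸ ha)
    simp [ρ, h3, h4]
  have hc' : ρ c = c := by
    have := hm [c] (by simp; grind) (by simp; grind)
    simpa using this
  rw [hx', hy']
  congr 1
  have hl : (V ++ [x] ++ (U ++ [y, c])).map ρ = V ++ (p :: (U ++ [q, c])) := by
    simp only [List.map_append, List.map_cons, List.map_nil, hx', hy', hc',
      hm V (by grind) (by grind), hm U (by grind) (by grind)]
    simp
  rw [hl]
  apply f.f_rot _ _ (by simp)
  · refine List.Perm.nodup ?_ hn0
    rw [List.perm_iff_count]
    intro a
    simp only [List.count_append, List.count_cons, List.count_nil]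
    omega
  · simpa using (List.isRotated_append (l := V) (l' := p :: (U ++ [q, c])))

theorem chain_jump (P : ModularOperad) (f : AssMorphism P) (prs : List (ℕ × ℕ))
    (hp : (lbl prs).Nodup) (c p q : ℕ) (U V l l' : List ℕ)
    (hm : (p, q) ∈ prs ∨ (q, p) ∈ prs) (hl : l.Nodup) (hs : ∀ a ∈ lbl prs, a ∈ l)
    (h1 : l ~r (c :: p :: (U ++ q :: V))) (h2 : l' ~r (p :: (U ++ q :: c :: V))) :
    xiChain P prs (f.f l) = xiChain P prs (f.f l') := by
  have hn1 := h1.nodup_iff.1 hl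
  have hpm : (p :: (U ++ q :: c :: V)).Perm (c :: p :: (U ++ q :: V)) := by
    have := (List.perm_middle (a := c) (l₁ := p :: (U ++ [q])) (l₂ := V))
    simpa using this
  have hn2 := hpm.nodup_iff.2 hn1
  have hl' := h2.nodup_iff.2 hn2
  have ne : l ≠ [] := by
    rintro rfl
    have := h1.perm.length_eq
    simp at this
  have ne' : l' ≠ [] := by
    rintro rfl
    have := h2.perm.length_eq
    simp at this
  rw [f.f_rot _ _ ne hl h1, f.f_rot _ _ ne' hl' h2]
  have hs1 : ∀ a ∈ lbl prs, a ∈ P.legs (f.f (c :: p :: (U ++ q :: V))) := by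
    intro a ha
    rw [f.legs_f _ (by simp) hn1, List.mem_toFinset]
    exact h1.mem_iff.1 (hs a ha)
  have hs2 : ∀ a ∈ lbl prs, a ∈ P.legs (f.f (p :: (U ++ q :: c :: V))) := by
    intro a ha
    rw [f.legs_f _ (by simp) hn2, List.mem_toFinset]
    exact hpm.mem_iff.2 (h1.mem_iff.1 (hs a ha))
  have key : ∀ u v, (u, v) ∈ prs →
      P.xi u v (f.f (c :: p :: (U ++ q :: V))) = P.xi u v (f.f (p :: (U ++ q :: c :: V))) →
      xiChain P prs (f.f (c :: p :: (U ++ q :: V))) =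
        xiChain P prs (f.f (p :: (U ++ q :: c :: V))) := by
    intro u v huv h
    obtain ⟨s, t, rfl⟩ := List.append_of_mem huv
    have hperm : (s ++ (u, v) :: t).Perm ((s ++ t) ++ [(u, v)]) :=
      List.perm_middle.trans (List.perm_append_singleton _ _).symm
    rw [chain_perm P hperm _ hp hs1, chain_perm P hperm _ hp hs2]
    simp only [xiChain, List.foldr_append, List.foldr_cons, List.foldr_nil, h]
  rcases hm with hm | hm
  · exact key p q hm (jump P f c p q U V hn1)
  · refine key q p hm ?_
    rw [P.xi_symm q p, P.xi_symm q p]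
    exact jump P f c p q U V hn1

/-- A label can be moved past `T` without changing the contracted element. -/
def Pass (P : ModularOperad) (f : AssMorphism P) (prs : List (ℕ × ℕ)) (T : List ℕ) : Prop :=
  ∀ (c : ℕ) (Z : List ℕ), (c :: (T ++ Z)).Nodup → (∀ a ∈ lbl prs, a ∈ c :: (T ++ Z)) →
    xiChain P prs (f.f (c :: (T ++ Z))) = xiChain P prs (f.f (T ++ c :: Z))

theorem pass_append {P : ModularOperad} {f : AssMorphism P} {prs : List (ℕ × ℕ)}
    {S T : List ℕ} (hS : Pass P f prs S) (hT : Pass P f prs T) : Pass P f prs (S ++ T) := by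
  intro c Z hn hs
  have p1 : (c :: (S ++ T ++ Z)).Perm (S ++ c :: (T ++ Z)) := by
    simpa using (List.perm_middle (a := c) (l₁ := S) (l₂ := T ++ Z)).symm
  have r1 : (S ++ c :: (T ++ Z)) ~r (c :: (T ++ (Z ++ S))) := by
    simpa using (List.isRotated_append (l := S) (l' := c :: (T ++ Z)))
  have r2 : (T ++ c :: (Z ++ S)) ~r (S ++ T ++ c :: Z) := by
    simpa using (List.isRotated_append (l := T ++ c :: Z) (l' := S))
  have p2 : (c :: (T ++ (Z ++ S))).Perm (T ++ c :: (Z ++ S)) := List.perm_middle.symm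
  have n1 := p1.nodup_iff.1 hn
  have n2 := r1.nodup_iff.1 n1
  have h1 := hS c (T ++ Z) (by simpa using hn) (by simpa using hs)
  have h2 := hT c (Z ++ S) n2
    (fun a ha => r1.mem_iff.1 (p1.mem_iff.1 (hs a ha)))
  rw [List.append_assoc, h1, f.f_rot _ _ (by simp) n1 r1, h2,
    f.f_rot _ _ (by simp) (p2.nodup_iff.1 n2) r2, List.append_assoc]

theorem pass_flatten {P : ModularOperad} {f : AssMorphism P} {prs : List (ℕ × ℕ)}
    (L : List (List ℕ)) (h : ∀ T ∈ L, Pass P f prs T) : Pass P f prs L.flatten := by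
  induction L with
  | nil => intro c Z _ _; rfl
  | cons T L ih =>
    rw [List.flatten_cons]
    exact pass_append (h T (by simp)) (ih fun S hS => h S (by simp [hS]))

theorem pass_block {P : ModularOperad} {f : AssMorphism P} {prs : List (ℕ × ℕ)}
    (hp : (lbl prs).Nodup) (u v : ℕ) (D : List ℕ) (h : (u, v) ∈ prs) :
    Pass P f prs (u :: (D ++ [v])) := by
  intro c Z hn hs
  refine chain_jump P f prs hp c u v D Z _ _ (Or.inl h) hn hs ?_ ?_
  · simp [List.IsRotated.refl]
  · simp [List.IsRotated.refl]

theorem pass_four {P : ModularOperad} {f : AssMorphism P} {prs : List (ℕ × ℕ)}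
    (hp : (lbl prs).Nodup) (s t u v : ℕ) (h : (s, u) ∈ prs) (h' : (t, v) ∈ prs) :
    Pass P f prs [s, t, u, v] := by
  intro c Z hn hs
  simp only [List.cons_append, List.nil_append] at hn hs ⊢
  have n1 : (s :: t :: u :: c :: v :: Z).Nodup := by
    simp only [List.nodup_cons, List.mem_cons] at hn ⊢
    grind
  have n2 : (s :: t :: c :: u :: v :: Z).Nodup := by
    simp only [List.nodup_cons, List.mem_cons] at hn ⊢
    grind
  have n3 : (s :: c :: t :: u :: v :: Z).Nodup := by
    simp only [List.nodup_cons, List.mem_cons] at hn ⊢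
    grind
  simp only [List.mem_cons] at hs
  calc xiChain P prs (f.f (c :: s :: t :: u :: v :: Z))
      = xiChain P prs (f.f (s :: t :: u :: c :: v :: Z)) := by
        refine chain_jump P f prs hp c s u [t] (v :: Z) _ _ (Or.inl h) hn
          (by simpa using hs) ?_ ?_ <;> simp [List.IsRotated.refl]
    _ = xiChain P prs (f.f (s :: t :: c :: u :: v :: Z)) := by
        refine chain_jump P f prs hp c v t (Z ++ [s]) [u] _ _ (Or.inr h') n1
          (by intro a ha; have := hs a ha; simp only [List.mem_cons]; tauto) ?_ ?_
        · simpa using (List.isRotated_append (l := [s, t, u]) (l' := c :: v :: Z))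
        · simpa using (List.isRotated_append (l := [s, t, c, u]) (l' := v :: Z))
    _ = xiChain P prs (f.f (s :: c :: t :: u :: v :: Z)) := by
        refine chain_jump P f prs hp c u s (v :: Z) [t] _ _ (Or.inr h) n2
          (by intro a ha; have := hs a ha; simp only [List.mem_cons]; tauto) ?_ ?_
        · simpa using (List.isRotated_append (l := [s, t]) (l' := c :: u :: v :: Z))
        · simpa using (List.isRotated_append (l := [s, c, t]) (l' := u :: v :: Z))
    _ = xiChain P prs (f.f (s :: t :: u :: v :: c :: Z)) := by
        refine chain_jump P f prs hp c t v [u] (Z ++ [s]) _ _ (Or.inl h') n3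
          (by intro a ha; have := hs a ha; simp only [List.mem_cons]; tauto) ?_ ?_
        · simpa using (List.isRotated_append (l := [s]) (l' := c :: t :: u :: v :: Z))
        · simpa using (List.isRotated_append (l := [s]) (l' := t :: u :: v :: c :: Z))

theorem blocks_perm (e : ℕ → ℕ) (R : List (List ℕ)) (k : ℕ) :
    ((R.zipIdx k).map fun p => e (2 * p.2 + 1) :: (p.1 ++ [e (2 * p.2 + 2)])).flatten.Perm
      (R.flatten ++ (List.range' (2 * k + 1) (2 * R.length)).map e) := by
  induction R generalizing k with
  | nil => simp
  | cons D R ih =>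
    have h := ih (k + 1)
    have e1 : 2 * (D :: R).length = 2 * R.length + 1 + 1 := by simp; ring
    rw [e1, List.range'_succ, List.range'_succ]
    simp only [List.zipIdx_cons, List.map_cons, List.flatten_cons]
    refine (h.append_left _).trans ?_
    rw [List.perm_iff_count]
    intro a
    have e2 : 2 * (k + 1) + 1 = 2 * k + 1 + 1 + 1 := by ring
    simp only [List.count_append, List.count_cons, List.count_nil, e2]
    have e3 : 2 * k + 1 + 1 = 2 * k + 2 := by ring
    rw [e3]
    omega

theorem pairs_perm1 (e : ℕ → ℕ) (n : ℕ) :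
    lbl ((List.range n).map fun i => (e (2 * i + 1), e (2 * i + 2))) =
      (List.range' 1 (2 * n)).map e := by
  induction n with
  | zero => simp [lbl]
  | succ n ih =>
    rw [List.range_succ, List.map_append, lbl_append, ih]
    have : 2 * (n + 1) = 2 * n + 1 + 1 := by ring
    rw [this, List.range'_1_concat, List.range'_1_concat]
    simp [lbl]
    constructor <;> congr 1 <;> ring

theorem pairs_perm2 (e : ℕ → ℕ) (b g : ℕ) (hb : 1 ≤ b) :
    (lbl ((List.range g).map fun j =>
      [(e (2 * b - 1 + 4 * j), e (2 * b + 1 + 4 * j)),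
       (e (2 * b + 4 * j), e (2 * b + 2 + 4 * j))]).flatten).Perm
      ((List.range' (2 * b - 1) (4 * g)).map e) := by
  induction g with
  | zero => simp [lbl]
  | succ g ih =>
    rw [List.range_succ, List.map_append, List.flatten_append, lbl_append]
    have : 4 * (g + 1) = 4 * g + 1 + 1 + 1 + 1 := by ring
    rw [this, List.range'_1_concat, List.range'_1_concat, List.range'_1_concat,
      List.range'_1_concat]
    refine (ih.append_right _).trans ?_
    simp only [List.map_append, List.append_assoc]
    refine List.Perm.append_left _ ?_
    have a1 : 2 * b - 1 + (4 * g + 1) = 2 * b + 4 * g := by omega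
    have a2 : 2 * b - 1 + (4 * g + 1 + 1) = 2 * b + 1 + 4 * g := by omega
    have a3 : 2 * b - 1 + (4 * g + 1 + 1 + 1) = 2 * b + 2 + 4 * g := by omega
    simp only [a1, a2, a3, lbl, List.map_cons, List.map_nil, List.flatten_cons,
      List.flatten_nil, List.cons_append, List.nil_append]
    exact (List.Perm.swap _ _ _).cons _

theorem four_blocks (e : ℕ → ℕ) (s g : ℕ) :
    ((List.range (4 * g)).map fun j => e (s + j)) =
      ((List.range g).map fun j => [e (s + 4 * j), e (s + 4 * j + 1), e (s + 4 * j + 2),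
        e (s + 4 * j + 3)]).flatten := by
  induction g with
  | zero => simp
  | succ g ih =>
    have : 4 * (g + 1) = 4 * g + 1 + 1 + 1 + 1 := by ring
    rw [this]
    simp only [List.range_succ, List.map_append, List.flatten_append, ih]
    simp [← add_assoc]

theorem ftilde_rotate_block (P : ModularOperad) (f : AssMorphism P)
    (C₁ : List ℕ) (R : List (List ℕ)) (g : ℕ) (e : ℕ → ℕ)
    (hL : QOValid (C₁ :: R))
    (he : FreshLabels e (4 * g + 2 * (C₁ :: R).length - 2)
      (C₁ :: R).flatten.toFinset) :
    xiChain P (canonPairs (C₁ :: R).length g e) (f.f (canonList (C₁ :: R) g e)) =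
      xiChain P (canonPairs (C₁ :: R).length g e)
        (f.f (canonList (C₁.rotate 1 :: R) g e)) := by
  obtain ⟨-, hnd, hne⟩ := hL
  obtain ⟨hinj, hfr⟩ := he
  obtain ⟨c, C, rfl⟩ := List.exists_cons_of_ne_nil (hne C₁ (by simp))
  have hrot : (c :: C).rotate 1 = C ++ [c] := by simp
  rw [hrot]
  set n := R.length with hnR
  set E := (List.range' 1 (2 * n + 4 * g)).map e with hE
  have hEsplit : E = (List.range' 1 (2 * n)).map e ++
      (List.range' (2 * n + 1) (4 * g)).map e := by
    rw [hE, ← List.map_append, add_comm (2 * n) 1, List.range'_append_1]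
  have hlen : ((c :: C) :: R).length = n + 1 := by simp [hnR]
  rw [hlen] at hinj hfr ⊢
  have hEn : E.Nodup := by
    rw [hE]
    refine List.Nodup.map_on ?_ List.nodup_range'
    intro a ha b hb hab
    simp only [List.mem_range'_1] at ha hb
    exact hinj (by constructor <;> omega) (by constructor <;> omega) hab
  have hEd : ∀ a ∈ E, a ∉ ((c :: C) :: R).flatten := by
    intro a ha
    simp only [hE, List.mem_map, List.mem_range'_1] at ha
    obtain ⟨i, hi, rfl⟩ := ha
    have := hfr i (by constructor <;> omega)
    simpa only [List.mem_toFinset] using this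
  set prs := canonPairs (n + 1) g e with hprs
  have hlbl : (lbl prs).Perm E := by
    rw [hprs, canonPairs, lbl_append, hEsplit, Nat.add_sub_cancel, pairs_perm1]
    refine List.Perm.append_left _ ?_
    have := pairs_perm2 e (n + 1) g (by omega)
    have a : 2 * (n + 1) - 1 = 2 * n + 1 := by omega
    rw [a] at this
    rw [a]
    exact this
  have hp : (lbl prs).Nodup := hlbl.nodup_iff.2 hEn
  set T := (R.zipIdx.map fun p => e (2 * p.2 + 1) :: (p.1 ++ [e (2 * p.2 + 2)])).flatten
        ++ ((List.range (4 * g)).map fun j => e (2 * n + 1 + j)) with hT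
  have hl1 : canonList ((c :: C) :: R) g e = c :: C ++ T := by
    simp only [canonList, hT, List.append_assoc, hnR]
  have hl2 : canonList ((C ++ [c]) :: R) g e = C ++ [c] ++ T := by
    simp only [canonList, hT, List.append_assoc, hnR]
  have hTp : T.Perm (R.flatten ++ E) := by
    rw [hT, hEsplit, ← List.append_assoc]
    refine List.Perm.append ?_ ?_
    · simpa using blocks_perm e R 0
    · rw [List.range'_eq_map_range, List.map_map]
      exact List.Perm.refl _
  have hpass : Pass P f prs T := by
    rw [hT, four_blocks]
    refine pass_append (pass_flatten _ ?_) (pass_flatten _ ?_)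
    · intro S hS
      simp only [List.mem_map] at hS
      obtain ⟨p, hpm, rfl⟩ := hS
      have hlt := List.snd_lt_of_mem_zipIdx hpm
      refine pass_block hp _ _ _ ?_
      rw [hprs, canonPairs]
      refine List.mem_append_left _ (List.mem_map.2 ⟨p.2, ?_, rfl⟩)
      simp only [List.mem_range]
      omega
    · intro S hS
      simp only [List.mem_map] at hS
      obtain ⟨j, hj, rfl⟩ := hS
      refine pass_four hp _ _ _ _ ?_ ?_ <;> rw [hprs, canonPairs] <;>
        refine List.mem_append_right _ (List.mem_flatten.2 ⟨_, List.mem_map.2 ⟨j, hj, rfl⟩, ?_⟩)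
      · have a1 : 2 * (n + 1) - 1 + 4 * j = 2 * n + 1 + 4 * j := by omega
        have a2 : 2 * (n + 1) + 1 + 4 * j = 2 * n + 1 + 4 * j + 2 := by omega
        rw [a1, a2]; simp
      · have a1 : 2 * (n + 1) + 4 * j = 2 * n + 1 + 4 * j + 1 := by omega
        have a2 : 2 * (n + 1) + 2 + 4 * j = 2 * n + 1 + 4 * j + 3 := by omega
        rw [a1, a2]; simp
  have hperm : (c :: C ++ T).Perm (((c :: C) :: R).flatten ++ E) := by
    rw [List.flatten_cons, List.append_assoc]
    exact hTp.append_left _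
  have hbig : (((c :: C) :: R).flatten ++ E).Nodup := by
    rw [List.nodup_append]
    exact ⟨hnd, hEn, fun a ha b hb hab => hEd b hb (hab ▸ ha)⟩
  have n1 : (c :: C ++ T).Nodup := hperm.nodup_iff.2 hbig
  have p2 : (c :: (T ++ C)).Perm (c :: C ++ T) := List.perm_append_comm.cons c
  have r1 : (C ++ [c] ++ T) ~r (c :: (T ++ C)) := by
    simpa using (List.isRotated_append (l := C) (l' := c :: T))
  have r2 : (T ++ c :: C) ~r (c :: C ++ T) := List.isRotated_append
  have n2 := p2.nodup_iff.2 n1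
  have key := hpass c C n2 (fun a ha => p2.mem_iff.2
    (hperm.mem_iff.2 (List.mem_append_right _ (hlbl.mem_iff.1 ha))))
  rw [hl1, hl2, f.f_rot _ _ (by simp) (r1.nodup_iff.2 n2) r1, key,
    f.f_rot _ _ (by simp) (r2.nodup_iff.2 n1) r2]
end
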